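/- arXiv:2403.10757 — 4 statements merged into one kernel-verified Lean document; each statement's English description precedes it below -/
import Mathlib

section
/- Let H and K be finitely generated subgroups of a free group F = FreeGroup A and let T ⊆ F be a set of double coset representatives for H\F/K. Then the (finitely supported) sum ∑_{w ∈ T} rr(H^w ⊓ K) ≤ 2 · rr(H) · rr(K), where H^w = w⁻¹Hw (the strengthened Hanna Neumann inequality of W. Neumann). -/
/-- The rank of a subgroup: the minimal cardinality of a (finite) generating set. -/
noncomputable def rkSubgroup {G : Type*} [Group G] (H : Subgroup G) : ℕ :=
  sInf {n : ℕ | ∃ S : Finset G, S.card = n ∧ Subgroup.closure (S : Set G) = H}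

/-- The reduced rank of a subgroup: `rank − 1` (truncated subtraction in `ℕ`). -/
noncomputable def rrSubgroup {G : Type*} [Group G] (H : Subgroup G) : ℕ :=
  rkSubgroup H - 1

/-- The conjugate subgroup `H^w = w⁻¹ H w`. -/
def conjSubgroup {G : Type*} [Group G] (w : G) (H : Subgroup G) : Subgroup G :=
  Subgroup.map (MulAut.conj w⁻¹).toMonoidHom H

/-!
A subgroup `H` of `F = FreeGroup A` is the stabilizer of a point of the Schreier graph of `F ⧸ H`,
and is freely generated by the loops through the edges outside a spanning tree. When `H` is finitely
generated, all but finitely much of the graph consists of hanging trees, and pruning vertices of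
degree at most one leaves a finite core in which the numbers `deg v - 2` are nonnegative and sum to
at most `2 * rr(H)`.

The fibre product of the cores for `H` and `K` lies in the Schreier graph of `F ⧸ H × F ⧸ K`. The
degree of `(u, v)` there is at most the degrees of `u` and `v`, so the positive part of
`deg (u, v) - 2` is at most `(deg u - 2) * (deg v - 2)`, and the sum of these positive parts is at
most `4 * rr(H) * rr(K)`.

The orbits of `F ⧸ H × F ⧸ K` correspond to the double cosets `HwK`, and the orbit of `HwK` has
stabilizers conjugate to `H^w ⊓ K`. The edges outside the fibre product can still be assigned
distinct endpoints outside it. An Euler characteristic count in finite subgraphs of an orbit then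
bounds the number of edges outside a spanning tree, which is therefore finite, and shows that
`2 * rr(H^w ⊓ K)` is at most the part of that sum contributed by the orbit.
-/

namespace HannaNeumann

open Finset

/-! ### Finite subgraphs and cores of multigraphs -/

/-- A multigraph with vertex type `V` and edge type `E`, loops and parallel edges allowed. Each edge
`e` runs from `endpoint false e` to `endpoint true e`. -/
structure Multigraph (V E : Type*) where
  endpoint : Bool → E → V

namespace Multigraph

variable {V E V' E' : Type*} {G : Multigraph V E} {G' : Multigraph V' E'}

/-- A finite subgraph of a multigraph, not necessarily induced. -/
structure Subgraph (G : Multigraph V E) where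
  verts : Finset V
  edges : Finset E
  endpoint_mem : ∀ e ∈ edges, ∀ b, G.endpoint b e ∈ verts

namespace Subgraph

open scoped Classical in
/-- The half-edges of a finite subgraph at a vertex; `(b, e)` is the half of `e` at
`endpoint b e`, so a loop contributes two of them. -/
noncomputable def darts (Γ : G.Subgraph) (v : V) : Finset (Bool × E) :=
  {d ∈ univ ×ˢ Γ.edges | G.endpoint d.1 d.2 = v}

/-- The degree of a vertex in a finite subgraph. -/
noncomputable def degree (Γ : G.Subgraph) (v : V) : ℕ :=
  #(Γ.darts v)

/-- The sum of `deg v - 2` over the vertices, with truncated subtraction. For a subgraph without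
vertices of degree less than two this is `-2 χ`. -/
noncomputable def excess (Γ : G.Subgraph) : ℕ :=
  ∑ v ∈ Γ.verts, (Γ.degree v - 2)

open scoped Classical in
/-- The intersection of two finite subgraphs. -/
noncomputable def inter (Γ Δ : G.Subgraph) : G.Subgraph where
  verts := Γ.verts ∩ Δ.verts
  edges := Γ.edges ∩ Δ.edges
  endpoint_mem e he b := by
    rw [mem_inter] at he ⊢
    exact ⟨Γ.endpoint_mem e he.1 b, Δ.endpoint_mem e he.2 b⟩

open scoped Classical in
/-- The finite subgraph left after deleting a vertex together with all edges at it. -/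
noncomputable def deleteVert (Γ : G.Subgraph) (v : V) : G.Subgraph where
  verts := Γ.verts.erase v
  edges := {e ∈ Γ.edges | ∀ b, G.endpoint b e ≠ v}
  endpoint_mem e he b := by
    rw [mem_filter] at he
    exact mem_erase.2 ⟨he.2 b, Γ.endpoint_mem e he.1 b⟩

/-- The image of a finite subgraph under an injective morphism of multigraphs. -/
def map (Γ : G.Subgraph) (f : V ↪ V') (g : E ↪ E')
    (hfg : ∀ b e, G'.endpoint b (g e) = f (G.endpoint b e)) : G'.Subgraph where
  verts := Γ.verts.map f
  edges := Γ.edges.map g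
  endpoint_mem e' he' b := by
    obtain ⟨e, he, rfl⟩ := mem_map.1 he'
    rw [hfg]
    exact mem_map_of_mem f (Γ.endpoint_mem e he b)

lemma mem_darts {Γ : G.Subgraph} {v : V} {d : Bool × E} :
    d ∈ Γ.darts v ↔ d.2 ∈ Γ.edges ∧ G.endpoint d.1 d.2 = v := by
  simp [darts]

lemma degree_le_degree_of_injOn {Γ : G.Subgraph} {Γ' : G'.Subgraph} {v : V} {v' : V'}
    (g : Bool × E → Bool × E') (hg : Set.MapsTo g (Γ.darts v) (Γ'.darts v'))
    (hinj : Set.InjOn g (Γ.darts v)) : Γ.degree v ≤ Γ'.degree v' :=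
  card_le_card_of_injOn g hg hinj

lemma degree_inter_le (Γ Δ : G.Subgraph) (v : V) : (Γ.inter Δ).degree v ≤ Γ.degree v :=
  card_le_card fun d hd => by
    classical
    rw [mem_darts] at hd ⊢
    exact ⟨(mem_inter.1 hd.1).1, hd.2⟩

lemma sum_degree (Γ : G.Subgraph) : ∑ v ∈ Γ.verts, Γ.degree v = 2 * #Γ.edges := by
  classical
  have hmaps : ∀ d ∈ (univ : Finset Bool) ×ˢ Γ.edges, G.endpoint d.1 d.2 ∈ Γ.verts :=
    fun d hd => Γ.endpoint_mem d.2 (mem_product.1 hd).2 d.1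
  have hfiber := card_eq_sum_card_fiberwise hmaps
  rw [card_product, card_univ, Fintype.card_bool] at hfiber
  rw [hfiber]
  exact sum_congr rfl fun v _ => by unfold degree darts; congr

/-- `Γ` is a core if the edges outside it can be assigned, injectively, endpoints outside it.
This holds when the edges outside `Γ` form a forest hanging off `Γ`: assign to each of them its
endpoint away from `Γ`. -/
def IsCore (Γ : G.Subgraph) : Prop :=
  ∃ out : E → Bool, (∀ e ∉ Γ.edges, G.endpoint (out e) e ∉ Γ.verts) ∧
    Set.InjOn (fun e => G.endpoint (out e) e) {e | e ∉ Γ.edges}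

variable {Γ : G.Subgraph}

open scoped Classical in
lemma IsCore.card_edges_sdiff_le (hΓ : Γ.IsCore) (Δ : G.Subgraph) :
    #(Δ.edges \ Γ.edges) ≤ #(Δ.verts \ Γ.verts) := by
  obtain ⟨out, hout, hinj⟩ := hΓ
  refine card_le_card_of_injOn (fun e => G.endpoint (out e) e) (fun e he => ?_)
    (hinj.mono fun e he => (mem_sdiff.1 he).2)
  obtain ⟨heΔ, heΓ⟩ := mem_sdiff.1 he
  exact mem_sdiff.2 ⟨Δ.endpoint_mem e heΔ _, hout e heΓ⟩

open scoped Classical in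
lemma IsCore.two_mul_card_edges_le (hΓ : Γ.IsCore) (Δ : G.Subgraph) :
    2 * #Δ.edges ≤ 2 * #Δ.verts + ∑ v ∈ Γ.verts ∩ Δ.verts, (Γ.degree v - 2) := by
  have hinter : 2 * #(Γ.edges ∩ Δ.edges) ≤
      ∑ v ∈ Γ.verts ∩ Δ.verts, (Γ.degree v - 2) + 2 * #(Γ.verts ∩ Δ.verts) :=
    calc 2 * #(Γ.edges ∩ Δ.edges)
        = ∑ v ∈ Γ.verts ∩ Δ.verts, (Γ.inter Δ).degree v := (Γ.inter Δ).sum_degree.symm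
      _ ≤ ∑ v ∈ Γ.verts ∩ Δ.verts, (Γ.degree v - 2 + 2) :=
          sum_le_sum fun v _ => (degree_inter_le Γ Δ v).trans (by omega)
      _ = _ := by rw [sum_add_distrib, sum_const, smul_eq_mul, mul_comm 2]
  have hsdiff := hΓ.card_edges_sdiff_le Δ
  have hedges := card_sdiff_add_card_inter Δ.edges Γ.edges
  have hverts := card_sdiff_add_card_inter Δ.verts Γ.verts
  rw [inter_comm] at hedges hverts
  omega

lemma edge_eq_of_degree_le_one {v : V} (hv : Γ.degree v ≤ 1) {e e' : E} (he : e ∈ Γ.edges)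
    (he' : e' ∈ Γ.edges) {b b' : Bool} (hb : G.endpoint b e = v) (hb' : G.endpoint b' e' = v) :
    e = e' :=
  congrArg Prod.snd <| card_le_one.1 hv (b, e) (mem_darts.2 ⟨he, hb⟩) (b', e')
    (mem_darts.2 ⟨he', hb'⟩)

lemma IsCore.deleteVert (hΓ : Γ.IsCore) {v : V} (hv : v ∈ Γ.verts) (hdeg : Γ.degree v ≤ 1) :
    (Γ.deleteVert v).IsCore := by
  classical
  obtain ⟨out, hout, hinj⟩ := hΓ
  have hside : ∀ e, ∃ b, (e ∉ Γ.edges → b = out e) ∧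
      (e ∈ Γ.edges → e ∉ (Γ.deleteVert v).edges → G.endpoint b e = v) := by
    intro e
    by_cases he : e ∈ Γ.edges
    · by_cases hev : ∃ b, G.endpoint b e = v
      · obtain ⟨b, hb⟩ := hev
        exact ⟨b, fun h => absurd he h, fun _ _ => hb⟩
      · exact ⟨out e, fun _ => rfl, fun _ h =>
          absurd (mem_filter.2 ⟨he, fun b hb => hev ⟨b, hb⟩⟩) h⟩
    · exact ⟨out e, fun _ => rfl, fun h => absurd h he⟩
  choose side hside_out hside_v using hside
  have hne : ∀ e ∉ Γ.edges, G.endpoint (side e) e ∉ Γ.verts :=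
    fun e he => hside_out e he ▸ hout e he
  refine ⟨side, fun e he hmem => ?_, fun e he e' he' heq => ?_⟩
  · obtain ⟨hev, heΓ⟩ := mem_erase.1 hmem
    by_cases h : e ∈ Γ.edges
    · exact hev (hside_v e h he)
    · exact hne e h heΓ
  · by_cases h : e ∈ Γ.edges <;> by_cases h' : e' ∈ Γ.edges
    · exact edge_eq_of_degree_le_one hdeg h h' (hside_v e h he) (hside_v e' h' he')
    · have hv' : G.endpoint (side e') e' = v := heq.symm.trans (hside_v e h he)
      exact absurd (hv' ▸ hv) (hne e' h')
    · have hv' : G.endpoint (side e) e = v := heq.trans (hside_v e' h' he')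
      exact absurd (hv' ▸ hv) (hne e h)
    · refine hinj h h' ?_
      simpa only [hside_out e h, hside_out e' h'] using heq

lemma IsCore.exists_forall_two_le_degree (hΓ : Γ.IsCore) :
    ∃ Δ : G.Subgraph, Δ.IsCore ∧ ∀ v ∈ Δ.verts, 2 ≤ Δ.degree v := by
  classical
  induction hn : #Γ.verts using Nat.strong_induction_on generalizing Γ with
  | _ n ih =>
    by_cases hall : ∀ v ∈ Γ.verts, 2 ≤ Γ.degree v
    · exact ⟨Γ, hΓ, hall⟩
    · push Not at hall
      obtain ⟨v, hv, hdeg⟩ := hall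
      exact ih _ (hn ▸ card_erase_lt_of_mem hv) (hΓ.deleteVert hv (by omega)) rfl

lemma excess_add_two_mul_card_verts (hdeg : ∀ v ∈ Γ.verts, 2 ≤ Γ.degree v) :
    Γ.excess + 2 * #Γ.verts = 2 * #Γ.edges := by
  rw [← sum_degree, excess, mul_comm, ← smul_eq_mul, ← sum_const, ← sum_add_distrib]
  exact sum_congr rfl fun v hv => Nat.sub_add_cancel (hdeg v hv)

end Subgraph

/-! ### Spanning trees -/

/-- A spanning tree of a multigraph, rooted at `ρ`. Every other vertex `v` is joined by the tree
edge `edge v`, of which `v` is the endpoint `side v`, to a vertex of smaller height. -/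
structure SpanningTree (G : Multigraph V E) (ρ : V) where
  edge : {v // v ≠ ρ} → E
  side : {v // v ≠ ρ} → Bool
  height : V → ℕ
  endpoint_side : ∀ v, G.endpoint (side v) (edge v) = v
  height_lt : ∀ v, height (G.endpoint (!side v) (edge v)) < height v

namespace SpanningTree

variable {ρ : V} (T : G.SpanningTree ρ)

/-- The other endpoint of the tree edge that leads from a vertex towards the root. -/
def parent (v : {v // v ≠ ρ}) : V :=
  G.endpoint (!T.side v) (T.edge v)

/-- The edges outside a spanning tree. -/
def chords : Set E :=
  (Set.range T.edge)ᶜ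

lemma endpoint_edge (v : {v // v ≠ ρ}) (b : Bool) :
    G.endpoint b (T.edge v) = if b = T.side v then ↑v else T.parent v := by
  split_ifs with hb
  · rw [hb, T.endpoint_side]
  · rw [parent, Bool.eq_not_of_ne hb]

lemma edge_injective : Function.Injective T.edge := by
  intro v w hvw
  have hv := T.endpoint_side v
  have hw := T.endpoint_side w
  have hv_lt := T.height_lt v
  have hw_lt := T.height_lt w
  rw [hvw] at hv hv_lt
  by_cases hside : T.side v = T.side w
  · exact Subtype.ext (by rw [← hv, hside, hw])
  · rw [← Bool.eq_not_of_ne (Ne.symm hside), hw] at hv_lt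
    rw [← Bool.eq_not_of_ne hside, hv] at hw_lt
    omega

@[elab_as_elim]
lemma induction {p : V → Prop} (root : p ρ)
    (step : ∀ v : {v // v ≠ ρ}, p (T.parent v) → p v) (v : V) : p v := by
  induction hn : T.height v using Nat.strong_induction_on generalizing v with
  | _ n ih =>
    by_cases hv : v = ρ
    · exact hv ▸ root
    · exact step ⟨v, hv⟩ (ih _ (hn ▸ T.height_lt ⟨v, hv⟩) _ rfl)

lemma induction_edge {p : V → Prop} (root : p ρ)
    (step : ∀ v, p (G.endpoint true (T.edge v)) ↔ p (G.endpoint false (T.edge v))) (v : V) :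
    p v := by
  refine T.induction root (fun v hv => ?_) v
  have hstep := step v
  rw [T.endpoint_edge, T.endpoint_edge] at hstep
  cases hside : T.side v
  · simpa [hside, hv] using hstep
  · simpa [hside, hv] using hstep

open scoped Classical in
/-- The product of the labels `c` along the tree path from the root to a vertex, where edges are
multiplied on the left, and inverted when traversed backwards. -/
noncomputable def potential {M : Type*} [Group M] (c : E → M) (v : V) : M :=
  if hv : v = ρ then 1
  else (bif T.side ⟨v, hv⟩ then c (T.edge ⟨v, hv⟩) else (c (T.edge ⟨v, hv⟩))⁻¹) *
    potential c (T.parent ⟨v, hv⟩)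
termination_by T.height v
decreasing_by exact T.height_lt ⟨v, hv⟩

section Potential

variable {M : Type*} [Group M] (c : E → M)

lemma potential_root : T.potential c ρ = 1 := by
  rw [potential, dif_pos rfl]

lemma potential_edge (v : {v // v ≠ ρ}) :
    T.potential c (G.endpoint true (T.edge v)) =
      c (T.edge v) * T.potential c (G.endpoint false (T.edge v)) := by
  have hv : T.potential c v =
      (bif T.side v then c (T.edge v) else (c (T.edge v))⁻¹) * T.potential c (T.parent v) := by
    rw [potential, dif_neg v.2]
  cases hside : T.side v <;> simp [T.endpoint_edge, hv, hside]

end Potential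

lemma exists_finset_parent_mem (S : Finset V) :
    ∃ C : Finset V, S ⊆ C ∧ ρ ∈ C ∧ ∀ v : {v // v ≠ ρ}, ↑v ∈ C → T.parent v ∈ C := by
  classical
  have hsingle : ∀ s, ∃ C : Finset V, s ∈ C ∧ ρ ∈ C ∧
      ∀ v : {v // v ≠ ρ}, ↑v ∈ C → T.parent v ∈ C := by
    refine T.induction ⟨{ρ}, by simp, by simp, fun v hv => absurd (mem_singleton.1 hv) v.2⟩ ?_
    rintro v ⟨C, hvC, hρC, hC⟩
    refine ⟨insert ↑v C, by simp, by simp [hρC], fun w hw => mem_insert_of_mem ?_⟩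
    rcases mem_insert.1 hw with hwv | hw
    · exact Subtype.ext hwv ▸ hvC
    · exact hC w hw
  choose path hmem _ hpath using hsingle
  refine ⟨insert ρ (S.biUnion path), fun s hs => ?_, mem_insert_self _ _, fun v hv => ?_⟩
  · exact mem_insert_of_mem (mem_biUnion.2 ⟨s, hs, hmem s⟩)
  · obtain ⟨s, hs, hvs⟩ := mem_biUnion.1 (mem_of_mem_insert_of_ne hv v.2)
    exact mem_insert_of_mem (mem_biUnion.2 ⟨s, hs, hpath s v hvs⟩)

lemma exists_subgraph_of_subset_chords {N : Finset E} (hN : ↑N ⊆ T.chords) :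
    ∃ Γ : G.Subgraph, (∀ e, e ∈ Γ.edges ↔ e ∈ N ∨ ∃ v, ↑v ∈ Γ.verts ∧ T.edge v = e) ∧
      #Γ.edges + 1 = #Γ.verts + #N := by
  classical
  obtain ⟨C, hNC, hρC, hC⟩ := T.exists_finset_parent_mem
    (N.biUnion fun e => univ.image fun b => G.endpoint b e)
  let children : Finset {v // v ≠ ρ} := C.subtype (· ≠ ρ)
  have hchildren : #children + 1 = #C := by
    rw [card_subtype, filter_ne', card_erase_add_one hρC]
  have hdisj : Disjoint N (children.image T.edge) := by
    rw [disjoint_left]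
    rintro e he himage
    obtain ⟨v, -, rfl⟩ := mem_image.1 himage
    exact hN he ⟨v, rfl⟩
  refine ⟨⟨C, N ∪ children.image T.edge, fun e he b => ?_⟩, fun e => ?_, ?_⟩
  · rcases mem_union.1 he with he | he
    · exact hNC (mem_biUnion.2 ⟨e, he, mem_image_of_mem _ (mem_univ b)⟩)
    · obtain ⟨v, hv, rfl⟩ := mem_image.1 he
      rw [mem_subtype] at hv
      rw [T.endpoint_edge]
      split_ifs
      exacts [hv, hC v hv]
  · simp only [mem_union, mem_image, children, mem_subtype]
  · rw [card_union_of_disjoint hdisj, card_image_of_injective _ T.edge_injective, add_assoc,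
      hchildren, add_comm]

lemma exists_isCore (hfin : T.chords.Finite) : ∃ Γ : G.Subgraph, Γ.IsCore := by
  classical
  obtain ⟨Γ, hΓ, -⟩ := T.exists_subgraph_of_subset_chords (N := hfin.toFinset) (by simp)
  have hchild : ∀ e ∉ Γ.edges, ∃ b, ∃ v, T.edge v = e ∧ ↑v ∉ Γ.verts ∧ G.endpoint b e = v := by
    intro e he
    rw [hΓ, Set.Finite.mem_toFinset, chords, Set.mem_compl_iff, not_or, not_not] at he
    obtain ⟨⟨v, rfl⟩, hv⟩ := he
    exact ⟨T.side v, v, rfl, fun hmem => hv ⟨v, hmem, rfl⟩, T.endpoint_side v⟩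
  choose! out hout using hchild
  refine ⟨Γ, out, fun e he => ?_, fun e he e' he' heq => ?_⟩
  · obtain ⟨v, -, hv, hev⟩ := hout e he
    exact hev ▸ hv
  · obtain ⟨v, rfl, -, hev⟩ := hout e he
    obtain ⟨v', rfl, -, hev'⟩ := hout e' he'
    rw [Subtype.ext (hev.symm.trans (heq.trans hev'))]

/-- The tree edges of `Γ` inject into its vertices by taking children, and a vertex of least height
is never hit. -/
lemma card_edges_add_one_le (hfin : T.chords.Finite) (Γ : G.Subgraph) (hne : Γ.verts.Nonempty) :
    #Γ.edges + 1 ≤ #Γ.verts + T.chords.ncard := by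
  classical
  obtain ⟨m, hm, hmin⟩ := exists_min_image Γ.verts T.height hne
  have htree : {e ∈ Γ.edges | e ∉ T.chords} ⊆
      ((Γ.verts.erase m).subtype (· ≠ ρ)).image T.edge := by
    intro e he
    obtain ⟨heΓ, htree⟩ := mem_filter.1 he
    obtain ⟨v, rfl⟩ := not_not.1 htree
    have hvm : ↑v ≠ m := fun h =>
      (T.height_lt v).not_ge (h ▸ hmin _ (Γ.endpoint_mem _ heΓ _))
    have hvΓ : ↑v ∈ Γ.verts := T.endpoint_side v ▸ Γ.endpoint_mem _ heΓ _
    exact mem_image_of_mem _ (mem_subtype.2 (mem_erase.2 ⟨hvm, hvΓ⟩))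
  have htree_card : #{e ∈ Γ.edges | e ∉ T.chords} ≤ #(Γ.verts.erase m) :=
    calc #{e ∈ Γ.edges | e ∉ T.chords}
        ≤ #((Γ.verts.erase m).subtype (· ≠ ρ)) := (card_le_card htree).trans card_image_le
      _ ≤ #(Γ.verts.erase m) := by rw [card_subtype]; exact card_filter_le _ _
  have hchords : #{e ∈ Γ.edges | e ∈ T.chords} ≤ T.chords.ncard := by
    rw [Set.ncard_eq_toFinset_card _ hfin]
    exact card_le_card fun e he => hfin.mem_toFinset.2 (mem_filter.1 he).2
  have hsplit := card_filter_add_card_filter_not (s := Γ.edges) (· ∈ T.chords)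
  have herase := card_erase_add_one hm
  omega

lemma exists_isCore_excess_le (hfin : T.chords.Finite) :
    ∃ Γ : G.Subgraph, Γ.IsCore ∧ Γ.excess ≤ 2 * (T.chords.ncard - 1) := by
  obtain ⟨Γ₀, hΓ₀⟩ := T.exists_isCore hfin
  obtain ⟨Γ, hΓ, hdeg⟩ := hΓ₀.exists_forall_two_le_degree
  refine ⟨Γ, hΓ, ?_⟩
  rcases Γ.verts.eq_empty_or_nonempty with hempty | hne
  · simp [Subgraph.excess, hempty]
  · have hexcess := Subgraph.excess_add_two_mul_card_verts hdeg
    have hcard := T.card_edges_add_one_le hfin Γ hne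
    omega

open scoped Classical in
lemma two_mul_card_sub_one_le_of_isCore {Γ : G'.Subgraph} (hΓ : Γ.IsCore) (f : V ↪ V')
    (g : E ↪ E') (hfg : ∀ b e, G'.endpoint b (g e) = f (G.endpoint b e)) {N : Finset E}
    (hN : ↑N ⊆ T.chords) :
    2 * (#N - 1) ≤ ∑ v ∈ Γ.verts with v ∈ Set.range f, (Γ.degree v - 2) := by
  obtain ⟨Δ, -, hΔ⟩ := T.exists_subgraph_of_subset_chords hN
  have hcore := hΓ.two_mul_card_edges_le (Δ.map f g hfg)
  have hsub : Γ.verts ∩ (Δ.map f g hfg).verts ⊆ {v ∈ Γ.verts | v ∈ Set.range f} := by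
    intro v hv
    obtain ⟨hvΓ, hvΔ⟩ := mem_inter.1 hv
    obtain ⟨u, -, rfl⟩ := mem_map.1 hvΔ
    exact mem_filter.2 ⟨hvΓ, u, rfl⟩
  have hsum := sum_le_sum_of_subset (f := fun v => Γ.degree v - 2) hsub
  simp only [Subgraph.map, card_map] at hcore hsum
  omega

lemma finite_chords_of_isCore {Γ : G'.Subgraph} (hΓ : Γ.IsCore) (f : V ↪ V') (g : E ↪ E')
    (hfg : ∀ b e, G'.endpoint b (g e) = f (G.endpoint b e)) : T.chords.Finite := by
  classical
  by_contra hinf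
  obtain ⟨N, hN, hcard⟩ := Set.Infinite.exists_subset_card_eq hinf (Γ.excess + 2)
  have hle := T.two_mul_card_sub_one_le_of_isCore hΓ f g hfg hN
  have hsub : ∑ v ∈ Γ.verts with v ∈ Set.range f, (Γ.degree v - 2) ≤ Γ.excess :=
    sum_le_sum_of_subset (filter_subset _ _)
  omega

end SpanningTree
end Multigraph

/-! ### Generators of stabilizers in free groups -/

section Rank

variable {G : Type*} [Group G] {H : Subgroup G}

lemma exists_card_eq_rkSubgroup (hH : H.FG) :
    ∃ S : Finset G, #S = rkSubgroup H ∧ Subgroup.closure (S : Set G) = H := by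
  obtain ⟨S, hS⟩ := hH
  exact Nat.sInf_mem (s := {n | ∃ S : Finset G, #S = n ∧ Subgroup.closure (S : Set G) = H})
    ⟨#S, S, rfl, hS⟩

lemma rkSubgroup_le_card {S : Finset G} (hS : Subgroup.closure (S : Set G) = H) :
    rkSubgroup H ≤ #S :=
  Nat.sInf_le ⟨S, rfl, hS⟩

lemma rkSubgroup_closure_image_le_ncard {ι : Type*} (f : ι → G) {s : Set ι} (hs : s.Finite) :
    rkSubgroup (Subgroup.closure (f '' s)) ≤ s.ncard :=
  calc rkSubgroup (Subgroup.closure (f '' s)) ≤ #(hs.image f).toFinset :=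
        rkSubgroup_le_card (by rw [Set.Finite.coe_toFinset])
    _ = (f '' s).ncard := (Set.ncard_eq_toFinset_card _ _).symm
    _ ≤ s.ncard := Set.ncard_image_le hs

/-- A homomorphism to `M` is determined on a generating set `S`, so there are at most
`|M| ^ |S|` of them; by assumption there are at least `|M| ^ |ι|`. -/
lemma finite_and_card_le_rkSubgroup_of_exists_hom {ι M : Type*} [Group M] [Finite M]
    [Nontrivial M] (hH : H.FG) (x : ι → H)
    (hx : ∀ c : ι → M, ∃ φ : H →* M, ∀ i, φ (x i) = c i) :
    Finite ι ∧ Nat.card ι ≤ rkSubgroup H := by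
  classical
  obtain ⟨S, hScard, rfl⟩ := exists_card_eq_rkSubgroup hH
  choose φ hφ using hx
  let restrict (c : ι → M) (s : S) : M := φ c ⟨s, Subgroup.subset_closure s.2⟩
  have hinj : Function.Injective restrict := by
    intro c c' hcc'
    have heq : φ c = φ c' := MonoidHom.eq_of_eqOn_dense Subgroup.closure_closure_coe_preimage
      fun s hs => congrFun hcc' ⟨s, hs⟩
    ext i
    rw [← hφ c i, ← hφ c' i, heq]
  have hfin : Finite ι := by
    have := Finite.of_injective restrict hinj
    obtain ⟨m, hm⟩ := exists_ne (1 : M)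
    refine Finite.of_injective (fun i : ι => Pi.mulSingle i m) fun i j hij => ?_
    by_contra hne
    exact hm (by simpa [hne] using congrFun hij i)
  refine ⟨hfin, ?_⟩
  have hcard := Nat.card_le_card_of_injective restrict hinj
  rw [Nat.card_fun, Nat.card_fun, Nat.card_eq_fintype_card (α := S), Fintype.card_coe,
    hScard] at hcard
  exact (Nat.pow_le_pow_iff_right Finite.one_lt_card).1 hcard

end Rank

section Schreier

variable {A X : Type*} [MulAction (FreeGroup A) X]

variable (A X) in
/-- The Schreier graph of an action of `FreeGroup A` on `X`: the edge `(x, a)` runs from `x` to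
`a • x`. -/
def schreierGraph : Multigraph X (X × A) where
  endpoint b e := bif b then FreeGroup.of e.2 • e.1 else e.1

@[simp]
lemma schreierGraph_endpoint_false (e : X × A) : (schreierGraph A X).endpoint false e = e.1 := rfl

@[simp]
lemma schreierGraph_endpoint_true (e : X × A) :
    (schreierGraph A X).endpoint true e = FreeGroup.of e.2 • e.1 := rfl

lemma exists_eq_mk_mul_norm_lt [DecidableEq A] {x : FreeGroup A} (hx : x ≠ 1) :
    ∃ l y, x = FreeGroup.mk [l] * y ∧ y.norm < x.norm := by
  obtain ⟨l, L, hL⟩ := List.exists_cons_of_ne_nil (mt FreeGroup.toWord_eq_nil_iff.1 hx)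
  refine ⟨l, FreeGroup.mk L, ?_, ?_⟩
  · rw [FreeGroup.mul_mk, List.singleton_append, ← hL, FreeGroup.mk_toWord]
  · calc (FreeGroup.mk L).norm ≤ L.length := FreeGroup.norm_mk_le
      _ < x.norm := by rw [FreeGroup.norm, hL, List.length_cons]; exact Nat.lt_succ_self _

lemma exists_schreierGraph_endpoint_eq_mk_smul (l : A × Bool) (x : X) :
    ∃ e, (schreierGraph A X).endpoint l.2 e = FreeGroup.mk [l] • x ∧
      (schreierGraph A X).endpoint (!l.2) e = x := by
  obtain ⟨a, _ | _⟩ := l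
  · refine ⟨((FreeGroup.of a)⁻¹ • x, a), rfl, ?_⟩
    simp
  · exact ⟨(x, a), rfl, rfl⟩

/-- The tree of geodesics: the height of `x` is the length of a shortest word moving `ρ` to `x`,
and the tree edge at `x` is the first letter of such a word. -/
lemma nonempty_spanningTree_schreierGraph [MulAction.IsPretransitive (FreeGroup A) X] (ρ : X) :
    Nonempty ((schreierGraph A X).SpanningTree ρ) := by
  classical
  let norms (x : X) : Set ℕ := {n | ∃ g : FreeGroup A, g • ρ = x ∧ g.norm = n}
  have hnorms (x : X) : (norms x).Nonempty := by
    obtain ⟨g, hg⟩ := MulAction.exists_smul_eq (FreeGroup A) ρ x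
    exact ⟨g.norm, g, hg, rfl⟩
  have hstep (x : {x // x ≠ ρ}) : ∃ e b, (schreierGraph A X).endpoint b e = x ∧
      sInf (norms ((schreierGraph A X).endpoint (!b) e)) < sInf (norms x) := by
    obtain ⟨x, hx⟩ := x
    obtain ⟨g, rfl, hnorm⟩ := Nat.sInf_mem (hnorms x)
    obtain ⟨l, y, rfl, hlt⟩ := exists_eq_mk_mul_norm_lt (x := g) fun hg => hx (by simp [hg])
    obtain ⟨e, hhead, htail⟩ := exists_schreierGraph_endpoint_eq_mk_smul l (y • ρ)
    refine ⟨e, l.2, hhead.trans (mul_smul _ _ _).symm, ?_⟩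
    rw [htail, ← hnorm]
    have hle : sInf (norms (y • ρ)) ≤ y.norm := Nat.sInf_le ⟨y, rfl, rfl⟩
    exact hle.trans_lt hlt
  choose edge side hside hlt using hstep
  exact ⟨⟨edge, side, fun x => sInf (norms x), hside, hlt⟩⟩

/-- The cocycle of an edge labelling `c` of the Schreier graph: the left component of `cocycle c g`
sends `x` to the product of the labels along the path spelling `g` that ends in `x`. -/
def cocycle {M : Type*} [Group M] (c : X × A → M) :
    FreeGroup A →* (X → M) ⋊[mulAutArrow] FreeGroup A :=
  FreeGroup.lift fun a => ⟨fun x => c ((FreeGroup.of a)⁻¹ • x, a), FreeGroup.of a⟩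

section Cocycle

variable {M : Type*} [Group M] (c : X × A → M)

lemma cocycle_right (g : FreeGroup A) : (cocycle c g).right = g := by
  have hid : SemidirectProduct.rightHom.comp (cocycle c) = MonoidHom.id (FreeGroup A) :=
    FreeGroup.ext_hom _ _ fun a => by simp [cocycle]
  exact DFunLike.congr_fun hid g

lemma cocycle_mul_left (g h : FreeGroup A) (x : X) :
    (cocycle c (g * h)).left x = (cocycle c g).left x * (cocycle c h).left (g⁻¹ • x) := by
  rw [map_mul, SemidirectProduct.mul_left, cocycle_right]
  rfl

lemma cocycle_of_left (a : A) (x : X) :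
    (cocycle c (FreeGroup.of a)).left (FreeGroup.of a • x) = c (x, a) := by
  simp [cocycle]

/-- The homomorphism sending a loop at `ρ` to the product of the labels along it. -/
def stabilizerHom (ρ : X) : MulAction.stabilizer (FreeGroup A) ρ →* M where
  toFun g := (cocycle c g).left ρ
  map_one' := by simp
  map_mul' g h := by
    have hg : (g : FreeGroup A)⁻¹ • ρ = ρ := (g⁻¹).2
    rw [Subgroup.coe_mul, cocycle_mul_left, hg]

end Cocycle

variable {ρ : X} (T : (schreierGraph A X).SpanningTree ρ)

/-- The word spelled by the tree path from the root to a vertex. -/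
noncomputable def treeWord (x : X) : FreeGroup A :=
  T.potential (fun e => FreeGroup.of e.2) x

/-- The loop at the root that runs through the edge `e` and otherwise within the tree. -/
noncomputable def schreierGenerator (e : X × A) : FreeGroup A :=
  (treeWord T (FreeGroup.of e.2 • e.1))⁻¹ * FreeGroup.of e.2 * treeWord T e.1

lemma treeWord_root : treeWord T ρ = 1 :=
  T.potential_root _

lemma treeWord_edge (v : {v // v ≠ ρ}) :
    treeWord T (FreeGroup.of (T.edge v).2 • (T.edge v).1) =
      FreeGroup.of (T.edge v).2 * treeWord T (T.edge v).1 :=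
  T.potential_edge _ v

lemma treeWord_smul_root (x : X) : treeWord T x • ρ = x := by
  induction x using T.induction_edge with
  | root => rw [treeWord_root, one_smul]
  | step v =>
    rw [schreierGraph_endpoint_true, treeWord_edge, mul_smul, smul_left_cancel_iff,
      schreierGraph_endpoint_false]

lemma treeWord_mul_schreierGenerator (e : X × A) :
    treeWord T (FreeGroup.of e.2 • e.1) * schreierGenerator T e =
      FreeGroup.of e.2 * treeWord T e.1 := by
  rw [schreierGenerator, mul_assoc, mul_inv_cancel_left]

lemma schreierGenerator_edge (v : {v // v ≠ ρ}) : schreierGenerator T (T.edge v) = 1 := by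
  rw [schreierGenerator, treeWord_edge]
  group

lemma schreierGenerator_mem_stabilizer (e : X × A) :
    schreierGenerator T e ∈ MulAction.stabilizer (FreeGroup A) ρ := by
  rw [MulAction.mem_stabilizer_iff, schreierGenerator, mul_smul, mul_smul, treeWord_smul_root,
    inv_smul_eq_iff, treeWord_smul_root]

lemma inv_treeWord_mul_mul_treeWord_mem_closure (g : FreeGroup A) (x : X) :
    (treeWord T (g • x))⁻¹ * g * treeWord T x ∈
      Subgroup.closure (schreierGenerator T '' T.chords) := by
  induction g using FreeGroup.induction_on generalizing x with
  | C1 => simp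
  | of a =>
    change schreierGenerator T (x, a) ∈ _
    by_cases hchord : (x, a) ∈ T.chords
    · exact Subgroup.subset_closure ⟨_, hchord, rfl⟩
    · obtain ⟨v, hv⟩ := not_not.1 hchord
      rw [← hv, schreierGenerator_edge]
      exact one_mem _
  | inv_of a ih => simpa [mul_assoc] using inv_mem (ih ((FreeGroup.of a)⁻¹ • x))
  | mul g h ihg ihh => simpa [mul_assoc, mul_smul] using mul_mem (ihg (h • x)) (ihh x)

lemma closure_schreierGenerator :
    Subgroup.closure (schreierGenerator T '' T.chords) = MulAction.stabilizer (FreeGroup A) ρ := by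
  refine le_antisymm ?_ fun g hg => ?_
  · rw [Subgroup.closure_le]
    rintro _ ⟨e, -, rfl⟩
    exact schreierGenerator_mem_stabilizer T e
  · have hmem := inv_treeWord_mul_mul_treeWord_mem_closure T g ρ
    rwa [MulAction.mem_stabilizer_iff.1 hg, treeWord_root, inv_one, one_mul, mul_one] at hmem

lemma rkSubgroup_stabilizer_le_ncard_chords (hfin : T.chords.Finite) :
    rkSubgroup (MulAction.stabilizer (FreeGroup A) ρ) ≤ T.chords.ncard := by
  rw [← closure_schreierGenerator T]
  exact rkSubgroup_closure_image_le_ncard _ hfin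

section Independence

variable {M : Type*} [Group M] {c : X × A → M}

lemma cocycle_treeWord_left (hc : ∀ v, c (T.edge v) = 1) (x : X) :
    (cocycle c (treeWord T x)).left x = 1 := by
  induction x using T.induction_edge with
  | root => simp [treeWord_root]
  | step v =>
    rw [schreierGraph_endpoint_true, treeWord_edge, cocycle_mul_left, cocycle_of_left,
      inv_smul_smul, Prod.mk.eta, hc, one_mul, schreierGraph_endpoint_false]

lemma cocycle_schreierGenerator_left (hc : ∀ v, c (T.edge v) = 1) (e : X × A) :
    (cocycle c (schreierGenerator T e)).left ρ = c e := by
  have hhead : (treeWord T (FreeGroup.of e.2 • e.1))⁻¹ • FreeGroup.of e.2 • e.1 = ρ := by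
    rw [inv_smul_eq_iff, treeWord_smul_root]
  have h := cocycle_mul_left c (treeWord T (FreeGroup.of e.2 • e.1)) (schreierGenerator T e)
    (FreeGroup.of e.2 • e.1)
  rw [treeWord_mul_schreierGenerator, cocycle_mul_left, cocycle_of_left, inv_smul_smul,
    cocycle_treeWord_left T hc, cocycle_treeWord_left T hc, hhead, mul_one, one_mul] at h
  exact h.symm

end Independence

lemma finite_chords_and_ncard_chords_le (hfg : (MulAction.stabilizer (FreeGroup A) ρ).FG) :
    T.chords.Finite ∧ T.chords.ncard ≤ rkSubgroup (MulAction.stabilizer (FreeGroup A) ρ) := by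
  classical
  refine finite_and_card_le_rkSubgroup_of_exists_hom (M := Multiplicative (ZMod 2)) hfg
    (fun e : T.chords => ⟨schreierGenerator T e, schreierGenerator_mem_stabilizer T e⟩) fun c => ?_
  let c' (e : X × A) : Multiplicative (ZMod 2) := if he : e ∈ T.chords then c ⟨e, he⟩ else 1
  have hc' : ∀ v, c' (T.edge v) = 1 := fun v => dif_neg fun hv => hv ⟨v, rfl⟩
  refine ⟨stabilizerHom c' ρ, fun e => ?_⟩
  exact (cocycle_schreierGenerator_left T hc' e).trans (dif_pos e.2)

end Schreier

/-! ### Fibre products of cores -/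

section Product

open Multigraph

variable {A X Y : Type*}

/-- The two projections of an edge of the Schreier graph of `X × Y`, which share its label. -/
def edgeProjections (e : (X × Y) × A) : (X × A) × (Y × A) := ((e.1.1, e.2), (e.1.2, e.2))

lemma edgeProjections_injective :
    Function.Injective (edgeProjections : (X × Y) × A → (X × A) × (Y × A)) := by
  rintro ⟨⟨x, y⟩, a⟩ ⟨⟨x', y'⟩, a'⟩ h
  simp_all [edgeProjections]

variable [MulAction (FreeGroup A) X] [MulAction (FreeGroup A) Y]

lemma eq_of_schreierGraph_endpoint_eq {b : Bool} {x x' : X} {a : A}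
    (h : (schreierGraph A X).endpoint b (x, a) = (schreierGraph A X).endpoint b (x', a)) :
    x = x' := by
  cases b
  · exact h
  · exact smul_left_cancel _ h

lemma schreierGraph_prod_endpoint (b : Bool) (x : X) (y : Y) (a : A) :
    (schreierGraph A (X × Y)).endpoint b ((x, y), a) =
      ((schreierGraph A X).endpoint b (x, a), (schreierGraph A Y).endpoint b (y, a)) := by
  cases b <;> rfl

variable (Γ : (schreierGraph A X).Subgraph) (Δ : (schreierGraph A Y).Subgraph)

/-- The fibre product of finite subgraphs of two Schreier graphs over the edge labels, as a
subgraph of the Schreier graph of the product action. -/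
noncomputable def subgraphProd : (schreierGraph A (X × Y)).Subgraph where
  verts := Γ.verts ×ˢ Δ.verts
  edges := (Γ.edges ×ˢ Δ.edges).preimage edgeProjections edgeProjections_injective.injOn
  endpoint_mem := by
    rintro ⟨⟨x, y⟩, a⟩ he b
    obtain ⟨heΓ, heΔ⟩ := mem_product.1 (mem_preimage.1 he)
    rw [schreierGraph_prod_endpoint, mem_product]
    exact ⟨Γ.endpoint_mem _ heΓ b, Δ.endpoint_mem _ heΔ b⟩

variable {Γ Δ}

lemma mem_edges_subgraphProd {x : X} {y : Y} {a : A} :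
    ((x, y), a) ∈ (subgraphProd Γ Δ).edges ↔ (x, a) ∈ Γ.edges ∧ (y, a) ∈ Δ.edges := by
  rw [subgraphProd, mem_preimage, mem_product, edgeProjections]

lemma mem_darts_subgraphProd {b : Bool} {x u : X} {y v : Y} {a : A} :
    (b, ((x, y), a)) ∈ (subgraphProd Γ Δ).darts (u, v) ↔
      (b, (x, a)) ∈ Γ.darts u ∧ (b, (y, a)) ∈ Δ.darts v := by
  simp only [Subgraph.mem_darts, mem_edges_subgraphProd, schreierGraph_prod_endpoint,
    Prod.mk.injEq]
  tauto

lemma degree_subgraphProd_le_left (u : X) (v : Y) :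
    (subgraphProd Γ Δ).degree (u, v) ≤ Γ.degree u := by
  refine Subgraph.degree_le_degree_of_injOn (fun d => (d.1, (d.2.1.1, d.2.2))) ?_ ?_
  · rintro ⟨b, ⟨x, y⟩, a⟩ hd
    exact (mem_darts_subgraphProd.1 hd).1
  · rintro ⟨b, ⟨x, y⟩, a⟩ hd ⟨b', ⟨x', y'⟩, a'⟩ hd' heq
    simp only [Prod.mk.injEq] at heq
    obtain ⟨rfl, rfl, rfl⟩ := heq
    have hy := (Subgraph.mem_darts.1 (mem_darts_subgraphProd.1 hd).2).2
    have hy' := (Subgraph.mem_darts.1 (mem_darts_subgraphProd.1 hd').2).2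
    rw [eq_of_schreierGraph_endpoint_eq (hy.trans hy'.symm)]

lemma degree_subgraphProd_le_right (u : X) (v : Y) :
    (subgraphProd Γ Δ).degree (u, v) ≤ Δ.degree v := by
  refine Subgraph.degree_le_degree_of_injOn (fun d => (d.1, (d.2.1.2, d.2.2))) ?_ ?_
  · rintro ⟨b, ⟨x, y⟩, a⟩ hd
    exact (mem_darts_subgraphProd.1 hd).2
  · rintro ⟨b, ⟨x, y⟩, a⟩ hd ⟨b', ⟨x', y'⟩, a'⟩ hd' heq
    simp only [Prod.mk.injEq] at heq
    obtain ⟨rfl, rfl, rfl⟩ := heq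
    have hx := (Subgraph.mem_darts.1 (mem_darts_subgraphProd.1 hd).1).2
    have hx' := (Subgraph.mem_darts.1 (mem_darts_subgraphProd.1 hd').1).2
    rw [eq_of_schreierGraph_endpoint_eq (hx.trans hx'.symm)]

lemma excess_subgraphProd_le : (subgraphProd Γ Δ).excess ≤ Γ.excess * Δ.excess := by
  rw [Subgraph.excess, Subgraph.excess, Subgraph.excess, sum_mul_sum, ← sum_product']
  refine sum_le_sum fun ⟨u, v⟩ _ => ?_
  have hleft := degree_subgraphProd_le_left (Γ := Γ) (Δ := Δ) u v
  have hright := degree_subgraphProd_le_right (Γ := Γ) (Δ := Δ) u v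
  rcases Nat.eq_zero_or_pos (Δ.degree v - 2) with hzero | hpos
  · omega
  · exact (Nat.sub_le_sub_right hleft 2).trans (Nat.le_mul_of_pos_right _ hpos)

/-- An edge outside the product is sent to an endpoint outside `Γ` if its first projection lies
outside `Γ`, and to one whose second coordinate lies outside `Δ` otherwise. -/
lemma isCore_subgraphProd (hΓ : Γ.IsCore) (hΔ : Δ.IsCore) : (subgraphProd Γ Δ).IsCore := by
  classical
  obtain ⟨outΓ, houtΓ, hinjΓ⟩ := hΓ
  obtain ⟨outΔ, houtΔ, hinjΔ⟩ := hΔ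
  refine ⟨fun e => if (e.1.1, e.2) ∈ Γ.edges then outΔ (e.1.2, e.2) else outΓ (e.1.1, e.2),
    ?_, ?_⟩
  · rintro ⟨⟨x, y⟩, a⟩ he hmem
    rw [mem_edges_subgraphProd, not_and] at he
    rw [schreierGraph_prod_endpoint, subgraphProd, mem_product] at hmem
    by_cases hx : (x, a) ∈ Γ.edges
    · simp only [hx, if_true] at hmem
      exact houtΔ _ (he hx) hmem.2
    · simp only [hx, if_false] at hmem
      exact houtΓ _ hx hmem.1
  · rintro ⟨⟨x, y⟩, a⟩ he ⟨⟨x', y'⟩, a'⟩ he' heq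
    rw [Set.mem_ofPred_eq, mem_edges_subgraphProd, not_and] at he he'
    simp only [schreierGraph_prod_endpoint, Prod.mk.injEq] at heq
    obtain ⟨heqX, heqY⟩ := heq
    by_cases hx : (x, a) ∈ Γ.edges <;> by_cases hx' : (x', a') ∈ Γ.edges <;>
      simp only [hx, hx', if_true, if_false] at heqX heqY
    · obtain ⟨rfl, rfl⟩ := Prod.mk.inj (hinjΔ (he hx) (he' hx') heqY)
      rw [eq_of_schreierGraph_endpoint_eq heqX]
    · exact absurd (heqX ▸ Γ.endpoint_mem _ hx _) (houtΓ _ hx')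
    · exact absurd (heqX ▸ Γ.endpoint_mem _ hx' _) (houtΓ _ hx)
    · obtain ⟨rfl, rfl⟩ := Prod.mk.inj (hinjΓ hx hx' heqX)
      rw [eq_of_schreierGraph_endpoint_eq heqY]

end Product

section Inequality

open Multigraph

variable {A X : Type*} [MulAction (FreeGroup A) X]

lemma exists_isCore_excess_le_rrSubgroup_stabilizer [MulAction.IsPretransitive (FreeGroup A) X]
    {ρ : X} (hfg : (MulAction.stabilizer (FreeGroup A) ρ).FG) :
    ∃ Γ : (schreierGraph A X).Subgraph, Γ.IsCore ∧
      Γ.excess ≤ 2 * rrSubgroup (MulAction.stabilizer (FreeGroup A) ρ) := by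
  obtain ⟨T⟩ := nonempty_spanningTree_schreierGraph (A := A) ρ
  obtain ⟨hfin, hcard⟩ := finite_chords_and_ncard_chords_le T hfg
  obtain ⟨Γ, hΓ, hexcess⟩ := T.exists_isCore_excess_le hfin
  exact ⟨Γ, hΓ, hexcess.trans (Nat.mul_le_mul_left 2 (Nat.sub_le_sub_right hcard 1))⟩

lemma exists_isCore_excess_le_rrSubgroup {H : Subgroup (FreeGroup A)} (hH : H.FG) :
    ∃ Γ : (schreierGraph A (FreeGroup A ⧸ H)).Subgraph,
      Γ.IsCore ∧ Γ.excess ≤ 2 * rrSubgroup H := by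
  have hstab := MulAction.stabilizer_quotient H
  obtain ⟨Γ, hΓ, hexcess⟩ := exists_isCore_excess_le_rrSubgroup_stabilizer (hstab.symm ▸ hH)
  exact ⟨Γ, hΓ, by rwa [hstab] at hexcess⟩

variable {Γ : (schreierGraph A X).Subgraph}

open scoped Classical in
lemma two_mul_rrSubgroup_stabilizer_le (hΓ : Γ.IsCore) (x : X) :
    2 * rrSubgroup (MulAction.stabilizer (FreeGroup A) x) ≤
      ∑ v ∈ Γ.verts with v ∈ MulAction.orbit (FreeGroup A) x, (Γ.degree v - 2) := by
  let O := MulAction.orbit (FreeGroup A) x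
  let ρ : O := ⟨x, MulAction.mem_orbit_self x⟩
  have hstab : MulAction.stabilizer (FreeGroup A) ρ = MulAction.stabilizer (FreeGroup A) x := by
    ext g
    simp only [MulAction.mem_stabilizer_iff, Subtype.ext_iff, ρ]
    rfl
  obtain ⟨T⟩ := nonempty_spanningTree_schreierGraph (A := A) ρ
  let f : O ↪ X := Function.Embedding.subtype _
  let g : O × A ↪ X × A := f.prodMap (Function.Embedding.refl A)
  have hfg : ∀ b e, (schreierGraph A X).endpoint b (g e) = f ((schreierGraph A O).endpoint b e) :=
    fun b e => by cases b <;> rfl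
  have hfin := T.finite_chords_of_isCore hΓ f g hfg
  have hrank := rkSubgroup_stabilizer_le_ncard_chords T hfin
  have hchords := T.two_mul_card_sub_one_le_of_isCore hΓ f g hfg (N := hfin.toFinset) (by simp)
  have hrange : Set.range f = MulAction.orbit (FreeGroup A) x := Subtype.range_coe
  rw [hrange, ← Set.ncard_eq_toFinset_card _ hfin] at hchords
  rw [← hstab, rrSubgroup]
  omega

lemma two_mul_sum_rrSubgroup_stabilizer_le_excess (hΓ : Γ.IsCore) {ι : Type*} (x : ι → X)
    (I : Finset ι)
    (hx : (I : Set ι).PairwiseDisjoint fun i => MulAction.orbit (FreeGroup A) (x i)) :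
    2 * ∑ i ∈ I, rrSubgroup (MulAction.stabilizer (FreeGroup A) (x i)) ≤ Γ.excess := by
  classical
  rw [mul_sum]
  calc ∑ i ∈ I, 2 * rrSubgroup (MulAction.stabilizer (FreeGroup A) (x i))
      ≤ ∑ i ∈ I, ∑ v ∈ Γ.verts with v ∈ MulAction.orbit (FreeGroup A) (x i), (Γ.degree v - 2) :=
        sum_le_sum fun i _ => two_mul_rrSubgroup_stabilizer_le hΓ (x i)
    _ = ∑ v ∈ I.biUnion fun i => {v ∈ Γ.verts | v ∈ MulAction.orbit (FreeGroup A) (x i)},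
          (Γ.degree v - 2) := by
        refine (sum_biUnion fun i hi j hj hij => ?_).symm
        exact disjoint_filter.2 fun v _ hvi hvj => Set.disjoint_left.1 (hx hi hj hij) hvi hvj
    _ ≤ Γ.excess := sum_le_sum_of_subset (biUnion_subset.2 fun i _ => filter_subset _ _)

end Inequality

/-! ### Double cosets as orbits -/

section DoubleCosets

variable {G : Type*} [Group G] (H K : Subgroup G)

/-- The point `(w⁻¹H, K)` of `G/H × G/K`; its `G`-orbit corresponds to the double coset `HwK`. -/
def doubleCosetPoint (w : G) : (G ⧸ H) × (G ⧸ K) :=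
  (w⁻¹ • ((1 : G) : G ⧸ H), ((1 : G) : G ⧸ K))

lemma stabilizer_doubleCosetPoint (w : G) :
    MulAction.stabilizer G (doubleCosetPoint H K w) = conjSubgroup w H ⊓ K := by
  have hprod : MulAction.stabilizer G (doubleCosetPoint H K w) =
      MulAction.stabilizer G (w⁻¹ • ((1 : G) : G ⧸ H)) ⊓
        MulAction.stabilizer G ((1 : G) : G ⧸ K) := by
    ext g
    simp only [doubleCosetPoint, Subgroup.mem_inf, MulAction.mem_stabilizer_iff, Prod.smul_mk,
      Prod.mk.injEq]
  rw [hprod, MulAction.stabilizer_smul_eq_stabilizer_map_conj, MulAction.stabilizer_quotient,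
    MulAction.stabilizer_quotient]
  rfl

variable {H K}

lemma exists_eq_mul_mul_of_not_disjoint_orbit {w w' : G}
    (h : ¬Disjoint (MulAction.orbit G (doubleCosetPoint H K w))
      (MulAction.orbit G (doubleCosetPoint H K w'))) :
    ∃ h ∈ H, ∃ k ∈ K, w' = h * w * k := by
  obtain ⟨_, ⟨g, rfl⟩, g', hgg'⟩ := Set.not_disjoint_iff.1 h
  obtain ⟨hH, hK⟩ := Prod.mk.inj hgg'
  have hH' : (g' * (w'⁻¹ * 1))⁻¹ * (g * (w⁻¹ * 1)) ∈ H := QuotientGroup.eq.1 hH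
  have hK' : (g' * 1)⁻¹ * (g * 1) ∈ K := QuotientGroup.eq.1 hK
  exact ⟨_, hH', _, inv_mem hK', by group⟩

end DoubleCosets

end HannaNeumann

open HannaNeumann

/-- **Strengthened Hanna Neumann inequality** (W. Neumann): for finitely generated
subgroups `H, K` of a free group `F` and a set `T` of double coset representatives
for `H\F/K`, the finitely supported sum `∑_{w ∈ T} rr(H^w ⊓ K)` is at most
`2·rr(H)·rr(K)` (stated via all finite partial sums). -/
theorem strengthened_hanna_neumann {A : Type*} (H K : Subgroup (FreeGroup A))
    (hH : H.FG) (hK : K.FG) (T : Set (FreeGroup A))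
    (hT : ∀ g : FreeGroup A,
      ∃! w : FreeGroup A, w ∈ T ∧ ∃ h ∈ H, ∃ k ∈ K, g = h * w * k) :
    ∀ T' : Finset (FreeGroup A), ↑T' ⊆ T →
      ∑ w ∈ T', rrSubgroup (conjSubgroup w H ⊓ K) ≤
        2 * (rrSubgroup H * rrSubgroup K) := by
  intro T' hT'
  obtain ⟨Γ, hΓ, hΓ_excess⟩ := exists_isCore_excess_le_rrSubgroup hH
  obtain ⟨Δ, hΔ, hΔ_excess⟩ := exists_isCore_excess_le_rrSubgroup hK
  have hdisj : (T' : Set (FreeGroup A)).PairwiseDisjoint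
      fun w => MulAction.orbit (FreeGroup A) (doubleCosetPoint H K w) := by
    intro w hw w' hw' hne
    by_contra h
    exact hne <| (hT w').unique ⟨hT' hw, exists_eq_mul_mul_of_not_disjoint_orbit h⟩
      ⟨hT' hw', 1, one_mem H, 1, one_mem K, by group⟩
  suffices 2 * ∑ w ∈ T', rrSubgroup (conjSubgroup w H ⊓ K) ≤
      2 * (2 * (rrSubgroup H * rrSubgroup K)) by omega
  calc 2 * ∑ w ∈ T', rrSubgroup (conjSubgroup w H ⊓ K)
      = 2 * ∑ w ∈ T', rrSubgroup
          (MulAction.stabilizer (FreeGroup A) (doubleCosetPoint H K w)) := by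
        simp only [stabilizer_doubleCosetPoint]
    _ ≤ (subgraphProd Γ Δ).excess :=
        two_mul_sum_rrSubgroup_stabilizer_le_excess (isCore_subgraphProd hΓ hΔ) _ T' hdisj
    _ ≤ Γ.excess * Δ.excess := excess_subgraphProd_le
    _ ≤ (2 * rrSubgroup H) * (2 * rrSubgroup K) := Nat.mul_le_mul hΓ_excess hΔ_excess
    _ = 2 * (2 * (rrSubgroup H * rrSubgroup K)) := by ring
end

section
/- Let H and K be finitely generated subgroups of a free group F = FreeGroup A and let T ⊆ F be a set of double coset representatives for H\F/K. Then the set {w ∈ T | H^w ⊓ K ≠ ⊥} is finite; i.e., for all but finitely many double cosets HwK, the intersection w⁻¹Hw ⊓ K is the trivial subgroup. -/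
/-!
View `FreeGroup A` as the vertex set of its Cayley tree. The geodesics from `1` to the elements of
a finitely generated subgroup `H` stay within `H * B` for a finite set `B`: the geodesic to a
product `x * y` is covered by the geodesic to `x` and the `x`-translate of the geodesic to `y`.

If `k ∈ K` is nontrivial and `h = w * k * w⁻¹ ∈ H`, then for large `n` the element
`h ^ n = w * k ^ n * w⁻¹` is much longer than `w`, so a point in the middle of its geodesic lies on
the `w`-translate of the geodesic to `k ^ n`. Such a point is `x * b = w * (y * c)` with `x ∈ H`,
`y ∈ K`, and `b`, `c` in the finite sets attached to `H` and `K`. Hence `w` is in the double coset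
of `b * c⁻¹`, one of finitely many elements.
-/

open scoped Pointwise

section Subgroup

variable {G : Type*} [Group G] {H K : Subgroup G}

theorem mem_conjSubgroup {w g : G} : g ∈ conjSubgroup w H ↔ w * g * w⁻¹ ∈ H := by
  rw [conjSubgroup, Subgroup.mem_map_equiv, MulAut.conj_symm_apply, inv_inv]

theorem exists_conj_mem_of_conjSubgroup_inf_ne_bot {w : G} (h : conjSubgroup w H ⊓ K ≠ ⊥) :
    ∃ k ∈ K, k ≠ 1 ∧ w * k * w⁻¹ ∈ H := by
  obtain ⟨k, ⟨hkH, hkK⟩, hk⟩ := (Subgroup.bot_or_exists_ne_one _).resolve_left h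
  exact ⟨k, hkK, hk, mem_conjSubgroup.1 hkH⟩

theorem smul_coe_subgroup_mul {x : G} (hx : x ∈ H) (B : Set G) :
    x • ((H : Set G) * B) = H * B := by
  rw [← smul_mul_assoc, smul_coe_set hx]

theorem doubleCosetMk_mem_image_of_inter_smul_nonempty {B C : Set G} {w : G}
    (h : (((H : Set G) * B) ∩ w • ((K : Set G) * C)).Nonempty) :
    DoubleCoset.mk H K w ∈ DoubleCoset.mk H K '' (B * C⁻¹) := by
  obtain ⟨_, ⟨x, hx, b, hb, rfl⟩, _, ⟨y, hy, c, hc, rfl⟩, hxy⟩ := h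
  refine ⟨b * c⁻¹, Set.mul_mem_mul hb (Set.inv_mem_inv.2 hc), ?_⟩
  refine (DoubleCoset.eq H K _ _).2 ⟨x, hx, y⁻¹, inv_mem hy, ?_⟩
  simp only [smul_eq_mul] at hxy
  rw [← mul_assoc x, ← hxy]
  group

end Subgroup

section FreeGroup

open FreeGroup

variable {A : Type*}

section WordPath

variable {L M : List (A × Bool)}

/-- The vertices of the Cayley tree of `FreeGroup A` visited by the path that starts at `1` and
spells the word `L`. Words need not be reduced, so that paths can be concatenated before being
pulled tight. -/
def wordPath (L : List (A × Bool)) : Set (FreeGroup A) :=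
  mk '' {p | p <+: L}

theorem finite_wordPath (L : List (A × Bool)) : (wordPath L).Finite := by
  simpa only [wordPath, List.mem_inits] using (List.finite_toSet L.inits).image mk

theorem wordPath_append (L M : List (A × Bool)) :
    wordPath (L ++ M) = wordPath L ∪ mk L • wordPath M := by
  apply Set.Subset.antisymm
  · rintro _ ⟨p, hp, rfl⟩
    rcases List.prefix_or_prefix_of_prefix hp (List.prefix_append L M) with hpL | ⟨q, rfl⟩
    · exact Or.inl ⟨p, hpL, rfl⟩
    · exact Or.inr ⟨mk q, ⟨q, (List.prefix_append_right_inj L).1 hp, rfl⟩, mul_mk⟩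
  · rintro _ (⟨p, hp, rfl⟩ | ⟨_, ⟨q, hq, rfl⟩, rfl⟩)
    · exact ⟨p, List.prefix_append_of_prefix hp, rfl⟩
    · exact ⟨L ++ q, (List.prefix_append_right_inj L).2 hq, mul_mk.symm⟩

theorem wordPath_subset_of_step (h : Red.Step L M) : wordPath M ⊆ wordPath L := by
  obtain @⟨L₁, L₂, a, b⟩ := h
  have mk_cancel : mk [(a, b), (a, !b)] = 1 := Quot.sound Red.Step.cons_not
  change wordPath (L₁ ++ L₂) ⊆ wordPath (L₁ ++ ([(a, b), (a, !b)] ++ L₂))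
  simp only [wordPath_append, mk_cancel, one_smul]
  gcongr
  exact Set.subset_union_right

theorem wordPath_subset_of_red (h : Red L M) : wordPath M ⊆ wordPath L := by
  induction h with
  | refl => exact subset_rfl
  | tail _ step ih => exact (wordPath_subset_of_step step).trans ih

theorem wordPath_invRev_subset (L : List (A × Bool)) :
    wordPath (invRev L) ⊆ (mk L)⁻¹ • wordPath L := by
  rintro _ ⟨p, ⟨q, hpq⟩, rfl⟩
  have hL : L = invRev q ++ invRev p := by rw [← invRev_append, hpq, invRev_invRev]
  refine ⟨mk (invRev q), ⟨_, ⟨_, hL.symm⟩, rfl⟩, ?_⟩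
  simp only [hL, ← mul_mk, ← inv_mk, smul_eq_mul]
  group

end WordPath

section Geodesic

variable [DecidableEq A]

/-- The vertices of the geodesic from `1` to `x` in the Cayley tree of `FreeGroup A`, encoded as
the path spelled by the reduced word of `x`. Geodesics between other points are left translates
of these. -/
def geodesic (x : FreeGroup A) : Set (FreeGroup A) :=
  wordPath x.toWord

theorem finite_geodesic (x : FreeGroup A) : (geodesic x).Finite :=
  finite_wordPath x.toWord

theorem geodesic_one : geodesic (1 : FreeGroup A) = {1} := by
  simp [geodesic, wordPath, one_eq_mk]

theorem geodesic_mul_subset (x y : FreeGroup A) :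
    geodesic (x * y) ⊆ geodesic x ∪ x • geodesic y := by
  have h := wordPath_subset_of_red (reduce.red (L := x.toWord ++ y.toWord))
  rwa [← toWord_mul, wordPath_append, mk_toWord] at h

theorem geodesic_inv_subset (x : FreeGroup A) : geodesic x⁻¹ ⊆ x⁻¹ • geodesic x := by
  simpa only [geodesic, toWord_inv, mk_toWord] using wordPath_invRev_subset x.toWord

theorem geodesic_conj_subset (w v : FreeGroup A) :
    geodesic (w * v * w⁻¹) ⊆
      geodesic w ∪ w • geodesic v ∪ (w * v * w⁻¹) • geodesic w :=
  calc geodesic (w * v * w⁻¹)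
      ⊆ geodesic (w * v) ∪ (w * v) • geodesic w⁻¹ := geodesic_mul_subset _ _
    _ ⊆ geodesic w ∪ w • geodesic v ∪ (w * v) • w⁻¹ • geodesic w := by
      gcongr
      · exact geodesic_mul_subset w v
      · exact geodesic_inv_subset w
    _ = geodesic w ∪ w • geodesic v ∪ (w * v * w⁻¹) • geodesic w := by rw [smul_smul]

theorem norm_le_of_mem_geodesic {x g : FreeGroup A} (hg : g ∈ geodesic x) : g.norm ≤ x.norm := by
  obtain ⟨p, hp, rfl⟩ := hg
  exact norm_mk_le.trans hp.length_le

theorem exists_mem_geodesic_norm_eq {x : FreeGroup A} {n : ℕ} (hn : n ≤ x.norm) :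
    ∃ g ∈ geodesic x, g.norm = n ∧ (g⁻¹ * x).norm = x.norm - n := by
  set p := x.toWord.take n
  set q := x.toWord.drop n
  have hx : x = mk p * mk q := by rw [mul_mk, List.take_append_drop, mk_toWord]
  have hp : (mk p).norm ≤ n := norm_mk_le.trans (List.length_take_le n _)
  have hq : (mk q).norm ≤ x.norm - n := norm_mk_le.trans List.length_drop.le
  have hpq : x.norm ≤ (mk p).norm + (mk q).norm := by
    conv_lhs => rw [hx]
    exact norm_mul_le _ _
  have hgx : (mk p)⁻¹ * x = mk q := inv_mul_eq_of_eq_mul hx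
  refine ⟨mk p, ⟨p, List.take_prefix n _, rfl⟩, by lia, ?_⟩
  rw [hgx]
  lia

theorem geodesic_conj_inter_smul_geodesic_nonempty {w v : FreeGroup A}
    (h : 2 * w.norm + 2 ≤ (w * v * w⁻¹).norm) :
    (geodesic (w * v * w⁻¹) ∩ w • geodesic v).Nonempty := by
  obtain ⟨g, hg, g_norm, g_dist⟩ :=
    exists_mem_geodesic_norm_eq (n := w.norm + 1) (x := w * v * w⁻¹) (by lia)
  refine ⟨g, hg, ?_⟩
  rcases geodesic_conj_subset w v hg with (near_one | hgv) | ⟨y, hy, rfl⟩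
  · have := norm_le_of_mem_geodesic near_one
    lia
  · exact hgv
  · have := norm_le_of_mem_geodesic hy
    simp only [smul_eq_mul, mul_inv_rev _ y, inv_mul_cancel_right, norm_inv_eq] at g_dist
    lia

theorem exists_finite_forall_geodesic_subset_mul {H : Subgroup (FreeGroup A)} (hH : H.FG) :
    ∃ B : Set (FreeGroup A), B.Finite ∧ ∀ h ∈ H, geodesic h ⊆ H * B := by
  obtain ⟨S, rfl⟩ := hH
  set H := Subgroup.closure (S : Set (FreeGroup A))
  set B : Set (FreeGroup A) := insert 1 (⋃ s ∈ S, geodesic s)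
  have subset_mul : B ⊆ H * B := Set.subset_mul_right B (one_mem H)
  refine ⟨B, (S.finite_toSet.biUnion fun s _ => finite_geodesic s).insert 1, fun h hh => ?_⟩
  induction hh using Subgroup.closure_induction with
  | mem s hs =>
    exact ((Set.subset_biUnion_of_mem hs).trans (Set.subset_insert _ _)).trans subset_mul
  | one =>
    rw [geodesic_one, Set.singleton_subset_iff]
    exact subset_mul (Set.mem_insert _ _)
  | mul x y hx _ ihx ihy =>
    refine (geodesic_mul_subset x y).trans (Set.union_subset ihx ?_)
    rw [← smul_coe_subgroup_mul hx B]
    exact Set.smul_set_mono ihy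
  | inv x hx ih =>
    refine (geodesic_inv_subset x).trans ?_
    rw [← smul_coe_subgroup_mul (inv_mem hx) B]
    exact Set.smul_set_mono ih

theorem reduceCyclically_toWord_ne_nil {x : FreeGroup A} (hx : x ≠ 1) :
    reduceCyclically x.toWord ≠ [] := by
  intro h
  have hconj := reduceCyclically.conj_conjugator_reduceCyclically x.toWord
  rw [h, List.append_nil] at hconj
  apply hx
  rw [← mk_toWord (x := x), ← hconj, ← mul_mk, ← inv_mk, mul_inv_cancel]

theorem le_norm_pow {x : FreeGroup A} (hx : x ≠ 1) (n : ℕ) : n ≤ (x ^ n).norm := by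
  rcases n with _ | n
  · exact Nat.zero_le _
  calc n + 1
      ≤ (n + 1) * (reduceCyclically x.toWord).length :=
        Nat.le_mul_of_pos_right _ (List.length_pos_of_ne_nil (reduceCyclically_toWord_ne_nil hx))
    _ ≤ (x ^ (n + 1)).norm := by
      rw [FreeGroup.norm, toWord_pow,
        reduceCyclically.reduce_flatten_replicate_succ isReduced_toWord]
      simp only [List.length_append, List.length_flatten, List.map_replicate, List.sum_replicate,
        smul_eq_mul]
      lia

end Geodesic

theorem finite_image_mk_setOf_conjSubgroup_inf_ne_bot {H K : Subgroup (FreeGroup A)}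
    (hH : H.FG) (hK : K.FG) :
    (DoubleCoset.mk H K '' {w | conjSubgroup w H ⊓ K ≠ ⊥}).Finite := by
  classical
  obtain ⟨B, hB, geodesic_subset_HB⟩ := exists_finite_forall_geodesic_subset_mul hH
  obtain ⟨C, hC, geodesic_subset_KC⟩ := exists_finite_forall_geodesic_subset_mul hK
  refine ((hB.mul hC.inv).image (DoubleCoset.mk H K)).subset ?_
  rintro _ ⟨w, hw, rfl⟩
  obtain ⟨k, hk, hk_ne, hconj⟩ := exists_conj_mem_of_conjSubgroup_inf_ne_bot hw
  set n := 2 * w.norm + 2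
  have hpow : (w * k * w⁻¹) ^ n = w * k ^ n * w⁻¹ := conj_pow
  have hlong : n ≤ (w * k ^ n * w⁻¹).norm :=
    hpow ▸ le_norm_pow (conj_eq_one_iff.not.2 hk_ne) n
  have hmem : w * k ^ n * w⁻¹ ∈ H := hpow ▸ pow_mem hconj n
  apply doubleCosetMk_mem_image_of_inter_smul_nonempty
  exact (geodesic_conj_inter_smul_geodesic_nonempty hlong).mono
    (Set.inter_subset_inter (geodesic_subset_HB _ hmem)
      (Set.smul_set_mono (geodesic_subset_KC _ (pow_mem hk n))))

end FreeGroup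

/-- For finitely generated subgroups `H, K` of a free group `F` and a set `T` of
double coset representatives for `H\F/K`, the intersection `H^w ⊓ K` is trivial
for all but finitely many `w ∈ T`. -/
theorem finitely_many_nontrivial_intersections {A : Type*}
    (H K : Subgroup (FreeGroup A)) (hH : H.FG) (hK : K.FG) (T : Set (FreeGroup A))
    (hT : ∀ g : FreeGroup A,
      ∃! w : FreeGroup A, w ∈ T ∧ ∃ h ∈ H, ∃ k ∈ K, g = h * w * k) :
    {w ∈ T | conjSubgroup w H ⊓ K ≠ ⊥}.Finite := by
  have mk_injOn : Set.InjOn (DoubleCoset.mk H K) T := fun v hv w hw hvw =>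
    (hT w).unique ⟨hv, (DoubleCoset.eq H K v w).1 hvw⟩ ⟨hw, (DoubleCoset.eq H K w w).1 rfl⟩
  refine Set.Finite.of_finite_image ?_ (mk_injOn.mono (Set.sep_subset _ _))
  exact (finite_image_mk_setOf_conjSubgroup_inf_ne_bot hH hK).subset
    (Set.image_mono fun w hw => hw.2)
end

section
/- Let F = FreeGroup A be a free group, let ι be a finite nonempty index set, and for each i ∈ ι let H_i and K_i be subgroups of F such that H_i is a free factor of K_i. Then the intersection ⋂_{i∈ι} H_i is a free factor of ⋂_{i∈ι} K_i. -/
/-- `H` is a free factor of `K`: `H ≤ K` and `K` is the internal free product of `H`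
and some subgroup `L ≤ K`, i.e. the canonical homomorphism `H ∗ L →* K` induced by
the inclusions is bijective. -/
def IsFreeFactor {G : Type*} [Group G] (H K : Subgroup G) : Prop :=
  ∃ (hHK : H ≤ K) (L : Subgroup G) (hLK : L ≤ K),
    Function.Bijective
      ⇑(Monoid.Coprod.lift (Subgroup.inclusion hHK) (Subgroup.inclusion hLK))

/-!
Free factors are transitive, so the case of two pairs reduces to a weak form of the Kurosh
subgroup theorem: if `M` is a subgroup of a free product `A ∗ B`, then `A ∩ M` is a free factor of
`M`.

Let `A ∗ B` act on the cosets of `M`, let `s₀` be the coset of `1` and `O` its `A`-orbit. A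
transversal `t` with `t s • s₀ = s` gives Schreier elements `(t (g • s))⁻¹ * g * t s` of `M`. Let
`N` be generated by all of them with `g ∈ B`, together with those with `g ∈ A` and `s ∉ O`; the
ones with `g ∈ A` and `s ∈ O` lie in `A ∩ M` as soon as `t` maps `O` into `A`. Sending each
Schreier element to its copy in `(A ∩ M) ∗ N` is a cocycle on `A` and on `B`, hence extends to
`A ∗ B`, and restricting it to the stabilizer `M` of `s₀` gives a homomorphism `M →* (A ∩ M) ∗ N`.
It is inverse to the canonical map provided the cocycle is trivial on every `t s`, which is
arranged by choosing for `t s` a word that, after an initial element of `t '' O`, never applies an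
element of `A` inside `O`.
-/

open Monoid.Coprod Function MulAction

section FreeFactor

variable {G G' A B : Type*} [Group G] [Group G'] [Group A] [Group B] {H K M : Subgroup G}

theorem isFreeFactor_range_of_injective {f : A ∗ B →* G} (hf : Injective f) :
    IsFreeFactor (f.comp inl).range f.range := by
  have hinl : (f.comp inl).range ≤ f.range := fun _ ⟨a, ha⟩ ↦ ⟨inl a, ha⟩
  have hinr : (f.comp inr).range ≤ f.range := fun _ ⟨b, hb⟩ ↦ ⟨inr b, hb⟩
  refine ⟨hinl, (f.comp inr).range, hinr, ?_⟩
  let e : A ∗ B ≃* (f.comp inl).range ∗ (f.comp inr).range :=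
    MulEquiv.coprodCongr (MonoidHom.ofInjective (f := f.comp inl) (hf.comp inl_injective))
      (MonoidHom.ofInjective (f := f.comp inr) (hf.comp inr_injective))
  have lift_comp_e : (lift (Subgroup.inclusion hinl) (Subgroup.inclusion hinr)).comp e.toMonoidHom =
      (MonoidHom.ofInjective hf).toMonoidHom :=
    hom_ext rfl rfl
  rw [← e.bijective.of_comp_iff]
  exact (congrArg (Bijective ∘ DFunLike.coe) lift_comp_e).mpr (MonoidHom.ofInjective hf).bijective

theorem IsFreeFactor.exists_injective (h : IsFreeFactor H K) :
    ∃ (L : Subgroup G) (f : H ∗ L →* G), Injective f ∧ f.comp inl = H.subtype ∧ f.range = K := by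
  obtain ⟨hHK, L, hLK, hbij⟩ := h
  refine ⟨L, K.subtype.comp (lift (Subgroup.inclusion hHK) (Subgroup.inclusion hLK)),
    K.subtype_injective.comp hbij.injective, rfl, ?_⟩
  rw [MonoidHom.range_comp, MonoidHom.range_eq_top.2 hbij.surjective, ← MonoidHom.range_eq_map,
    K.range_subtype]

theorem IsFreeFactor.le (h : IsFreeFactor H K) : H ≤ K :=
  h.choose

theorem IsFreeFactor.refl (K : Subgroup G) : IsFreeFactor K K := by
  let e : K ∗ PUnit.{1} ≃* K := MulEquiv.coprodPUnit K
  have h := isFreeFactor_range_of_injective (f := K.subtype.comp e.toMonoidHom)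
    (K.subtype_injective.comp e.injective)
  have hinl : (K.subtype.comp e.toMonoidHom).comp inl = K.subtype := rfl
  have he : e.toMonoidHom.range = ⊤ := MonoidHom.range_eq_top.2 e.surjective
  rwa [hinl, MonoidHom.range_comp, he, ← MonoidHom.range_eq_map, K.range_subtype] at h

theorem IsFreeFactor.map (h : IsFreeFactor H K) {φ : G →* G'} (hφ : Injective φ) :
    IsFreeFactor (H.map φ) (K.map φ) := by
  obtain ⟨L, f, hf, hinl, rfl⟩ := h.exists_injective
  have h := isFreeFactor_range_of_injective (f := φ.comp f) (hφ.comp hf)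
  rwa [MonoidHom.comp_assoc, hinl, MonoidHom.range_comp, MonoidHom.range_comp, H.range_subtype] at h

theorem IsFreeFactor.trans (hHK : IsFreeFactor H K) (hKM : IsFreeFactor K M) :
    IsFreeFactor H M := by
  obtain ⟨L, f, hf, hf_inl, rfl⟩ := hHK.exists_injective
  obtain ⟨L', f', hf', hf'_inl, rfl⟩ := hKM.exists_injective
  let e : H ∗ (L ∗ L') ≃* f.range ∗ L' :=
    (MulEquiv.coprodAssoc H L L').symm.trans
      (MulEquiv.coprodCongr (MonoidHom.ofInjective hf) (MulEquiv.refl L'))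
  have h := isFreeFactor_range_of_injective (f := f'.comp e.toMonoidHom) (hf'.comp e.injective)
  have hinl : (f'.comp e.toMonoidHom).comp inl = H.subtype := by
    ext x
    calc f' (e (inl x)) = (f'.comp inl) (MonoidHom.ofInjective hf (inl x)) := rfl
      _ = (f.comp inl) x := by rw [hf'_inl]; rfl
      _ = x := by rw [hf_inl]; rfl
  have he : e.toMonoidHom.range = ⊤ := MonoidHom.range_eq_top.2 e.surjective
  rwa [hinl, MonoidHom.range_comp, he, ← MonoidHom.range_eq_map, H.range_subtype] at h

end FreeFactor

section Cocycle

variable {A B G S X Y : Type*} [Group A] [Group B] [Group G] [MulAction G S] [Group X] [Group Y]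

/-- A 1-cocycle of `A`, acting on `S` through `f : A →* G`, with values in the functions `S → X`:
the labelling of the arrow `s ⟶ f a • s` of the action groupoid by `c a s` is functorial. -/
def IsCocycle (f : A →* G) (c : A → S → X) : Prop :=
  ∀ a b s, c (a * b) s = c a (f b • s) * c b s

namespace IsCocycle

variable {f : A →* G} {c : A → S → X}

theorem map_one (hc : IsCocycle f c) (s : S) : c 1 s = 1 := by
  simpa using hc 1 1 s

theorem inv_apply_smul (hc : IsCocycle f c) (a : A) (s : S) :
    c a⁻¹ (f a • s) = (c a s)⁻¹ := by
  rw [eq_inv_iff_mul_eq_one, ← hc, inv_mul_cancel, hc.map_one]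

theorem map (hc : IsCocycle f c) (φ : X →* Y) : IsCocycle f fun a s ↦ φ (c a s) := fun a b s ↦
  (congrArg φ (hc a b s)).trans (map_mul φ _ _)

theorem comp {c : G → S → X} (hc : IsCocycle (.id G) c) (f : A →* G) :
    IsCocycle f fun a s ↦ c (f a) s := fun a b s ↦
  (congrArg (c · s) (map_mul f a b)).trans (hc _ _ _)

/-- A cocycle of the acting group restricts to a homomorphism on each stabilizer. -/
def stabilizerHom {c : G → S → X} (hc : IsCocycle (.id G) c) (s₀ : S) : stabilizer G s₀ →* X where
  toFun m := c m s₀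
  map_one' := hc.map_one s₀
  map_mul' m n := by
    have hn : (n : G) • s₀ = s₀ := n.2
    rw [Subgroup.coe_mul, hc, MonoidHom.id_apply, hn]

theorem coprod_ext [MulAction (A ∗ B) S] {c d : A ∗ B → S → X} (hc : IsCocycle (.id (A ∗ B)) c)
    (hd : IsCocycle (.id (A ∗ B)) d) (hinl : ∀ a, c (inl a) = d (inl a))
    (hinr : ∀ b, c (inr b) = d (inr b)) (g : A ∗ B) (s : S) : c g s = d g s := by
  induction g using Monoid.Coprod.induction_on generalizing s with
  | inl a => rw [hinl]
  | inr b => rw [hinr]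
  | mul g h hg hh => rw [hc, hd, hg, hh]

/-- The homomorphism into the wreath product `(S → X) ⋊ G` that encodes a cocycle. -/
def toSemidirectProduct (hc : IsCocycle f c) : A →* (S → X) ⋊[mulAutArrow] G where
  toFun a := ⟨fun s ↦ c a ((f a)⁻¹ • s), f a⟩
  map_one' := by ext <;> simp [hc.map_one]
  map_mul' a b := by
    ext s
    · simp only [SemidirectProduct.mul_left, map_mul, mul_inv_rev, mul_smul, Pi.mul_apply]
      rw [hc, smul_inv_smul]
      rfl
    · simp

theorem exists_coprod [MulAction (A ∗ B) S] {cA : A → S → X} {cB : B → S → X}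
    (hA : IsCocycle (inl : A →* A ∗ B) cA) (hB : IsCocycle (inr : B →* A ∗ B) cB) :
    ∃ c : A ∗ B → S → X, IsCocycle (.id (A ∗ B)) c ∧
      (∀ a, c (inl a) = cA a) ∧ ∀ b, c (inr b) = cB b := by
  let F : A ∗ B →* (S → X) ⋊[mulAutArrow] (A ∗ B) :=
    lift hA.toSemidirectProduct hB.toSemidirectProduct
  have F_right (g : A ∗ B) : (F g).right = g := by
    have : SemidirectProduct.rightHom.comp F = .id _ := hom_ext rfl rfl
    exact DFunLike.congr_fun this g
  refine ⟨fun g s ↦ (F g).left (g • s), fun g h s ↦ ?_, fun a ↦ ?_, fun b ↦ ?_⟩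
  · have (s' : S) : mulAutArrow g (F h).left s' = (F h).left (g⁻¹ • s') := rfl
    simp [F_right, mul_smul, this]
  · ext s
    simp [F, toSemidirectProduct]
  · ext s
    simp [F, toSemidirectProduct]

end IsCocycle

/-- The cocycle of Schreier elements of a transversal `t : S → G`. -/
def schreierCocycle (t : S → G) (g : G) (s : S) : G :=
  (t (g • s))⁻¹ * g * t s

theorem isCocycle_schreierCocycle (t : S → G) : IsCocycle (.id G) (schreierCocycle t) := by
  intro g h s
  simp only [schreierCocycle, mul_smul, MonoidHom.id_apply]
  group

variable {t : S → G} {s₀ : S}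

theorem schreierCocycle_mem_stabilizer (ht : ∀ s, t s • s₀ = s) (g : G) (s : S) :
    schreierCocycle t g s ∈ stabilizer G s₀ := by
  rw [mem_stabilizer_iff, schreierCocycle, mul_smul, mul_smul, ht, inv_smul_eq_iff, ht]

theorem schreierCocycle_of_mem_stabilizer (h₀ : t s₀ = 1) {g : G} (hg : g ∈ stabilizer G s₀) :
    schreierCocycle t g s₀ = g := by
  rw [schreierCocycle, mem_stabilizer_iff.1 hg, h₀, inv_one, one_mul, mul_one]

theorem schreierCocycle_transversal (h₀ : t s₀ = 1) (ht : ∀ s, t s • s₀ = s) (s : S) :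
    schreierCocycle t (t s) s₀ = 1 := by
  rw [schreierCocycle, ht, h₀, mul_one, inv_mul_cancel]

end Cocycle

section Kurosh

variable {A B S : Type*} [Group A] [Group B] [MulAction (A ∗ B) S] {s₀ : S}

variable (A B) in
/-- The orbit of `s₀` under the left factor of `A ∗ B`. -/
def leftOrbit (s₀ : S) : Set S :=
  Set.range fun a : A ↦ (inl a : A ∗ B) • s₀

theorem base_mem_leftOrbit : s₀ ∈ leftOrbit A B s₀ :=
  ⟨1, by simp⟩

theorem inl_smul_mem_leftOrbit_iff {a : A} {s : S} :
    (inl a : A ∗ B) • s ∈ leftOrbit A B s₀ ↔ s ∈ leftOrbit A B s₀ := by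
  constructor
  · rintro ⟨a', ha'⟩
    exact ⟨a⁻¹ * a', by simp only [map_mul, map_inv, mul_smul, ha', inv_smul_smul]⟩
  · rintro ⟨a', rfl⟩
    exact ⟨a * a', by simp only [map_mul, mul_smul]⟩

/-- The words which, read from the right and acting on `s₀`, start with an element of `T` and then
never apply a letter of `A` at a point of the `A`-orbit of `s₀`. -/
inductive IsAdmissible (s₀ : S) (T : Set (A ∗ B)) : A ∗ B → Prop
  | of_mem {g : A ∗ B} : g ∈ T → IsAdmissible s₀ T g
  | inl_mul (a : A) {g : A ∗ B} :
      IsAdmissible s₀ T g → g • s₀ ∉ leftOrbit A B s₀ → IsAdmissible s₀ T (inl a * g)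
  | inr_mul (b : B) {g : A ∗ B} : IsAdmissible s₀ T g → IsAdmissible s₀ T (inr b * g)

/-- A transversal of the stabilizer of `s₀`, indexed by the points of `S`, that is adapted to the
left factor of `A ∗ B`. -/
structure IsAdaptedTransversal (s₀ : S) (t : S → A ∗ B) : Prop where
  apply_base : t s₀ = 1
  smul_base (s : S) : t s • s₀ = s
  mem_range_inl {s : S} : s ∈ leftOrbit A B s₀ → t s ∈ (inl : A →* A ∗ B).range
  isAdmissible (s : S) : IsAdmissible s₀ (t '' leftOrbit A B s₀) (t s)

variable (A B) in
theorem exists_leftOrbit_section (s₀ : S) :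
    ∃ t : S → A ∗ B, t s₀ = 1 ∧
      ∀ s ∈ leftOrbit A B s₀, t s ∈ (inl : A →* A ∗ B).range ∧ t s • s₀ = s := by
  have (s : S) : ∃ g : A ∗ B, (s = s₀ → g = 1) ∧
      (s ∈ leftOrbit A B s₀ → g ∈ (inl : A →* A ∗ B).range ∧ g • s₀ = s) := by
    by_cases hs : s = s₀
    · exact ⟨1, fun _ ↦ rfl, fun _ ↦ ⟨one_mem _, by rw [one_smul, hs]⟩⟩
    by_cases hs' : s ∈ leftOrbit A B s₀
    · obtain ⟨a, ha⟩ := hs'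
      exact ⟨inl a, fun h ↦ (hs h).elim, fun _ ↦ ⟨⟨a, rfl⟩, ha⟩⟩
    · exact ⟨1, fun _ ↦ rfl, fun h ↦ (hs' h).elim⟩
  choose t ht_base ht using this
  exact ⟨t, ht_base s₀ rfl, ht⟩

theorem exists_isAdmissible_smul_eq [IsPretransitive (A ∗ B) S] {t : S → A ∗ B}
    (ht : ∀ s ∈ leftOrbit A B s₀, t s • s₀ = s) (s : S) :
    ∃ g, IsAdmissible s₀ (t '' leftOrbit A B s₀) g ∧ g • s₀ = s := by
  have of_mem_leftOrbit {s : S} (hs : s ∈ leftOrbit A B s₀) :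
      ∃ g, IsAdmissible s₀ (t '' leftOrbit A B s₀) g ∧ g • s₀ = s :=
    ⟨t s, .of_mem ⟨s, hs, rfl⟩, ht s hs⟩
  obtain ⟨w, rfl⟩ := exists_smul_eq (A ∗ B) s₀ s
  induction w using Monoid.Coprod.induction_on' with
  | one => exact of_mem_leftOrbit (by simpa using base_mem_leftOrbit)
  | inl_mul a w ih =>
    obtain ⟨g, hg, hgw⟩ := ih
    by_cases hw : w • s₀ ∈ leftOrbit A B s₀
    · exact of_mem_leftOrbit (by rwa [mul_smul, inl_smul_mem_leftOrbit_iff])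
    · exact ⟨inl a * g, hg.inl_mul a (hgw ▸ hw), by rw [mul_smul, mul_smul, hgw]⟩
  | inr_mul b w ih =>
    obtain ⟨g, hg, hgw⟩ := ih
    exact ⟨inr b * g, hg.inr_mul b, by rw [mul_smul, mul_smul, hgw]⟩

variable (A B) in
theorem exists_isAdaptedTransversal [IsPretransitive (A ∗ B) S] (s₀ : S) :
    ∃ t : S → A ∗ B, IsAdaptedTransversal s₀ t := by
  classical
  obtain ⟨t, ht_base, ht⟩ := exists_leftOrbit_section A B s₀
  choose w hw hw_smul using exists_isAdmissible_smul_eq fun s hs ↦ (ht s hs).2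
  let u : S → A ∗ B := (leftOrbit A B s₀).piecewise t w
  have hu_mem {s : S} (hs : s ∈ leftOrbit A B s₀) : u s = t s := Set.piecewise_eq_of_mem _ _ _ hs
  have hu_notMem {s : S} (hs : s ∉ leftOrbit A B s₀) : u s = w s :=
    Set.piecewise_eq_of_notMem _ _ _ hs
  have himage : u '' leftOrbit A B s₀ = t '' leftOrbit A B s₀ :=
    Set.image_congr fun _ ↦ hu_mem
  refine ⟨u, (hu_mem base_mem_leftOrbit).trans ht_base, fun s ↦ ?_,
    fun hs ↦ hu_mem hs ▸ (ht _ hs).1, fun s ↦ ?_⟩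
  · by_cases hs : s ∈ leftOrbit A B s₀
    · rw [hu_mem hs, (ht s hs).2]
    · rw [hu_notMem hs, hw_smul]
  · by_cases hs : s ∈ leftOrbit A B s₀
    · exact .of_mem ⟨s, hs, rfl⟩
    · rw [himage, hu_notMem hs]
      exact hw s

variable (A B) in
/-- The stabilizer of `s₀` in the left factor of `A ∗ B`, as a subgroup of `A ∗ B`. -/
def leftStabilizer (s₀ : S) : Subgroup (A ∗ B) :=
  (inl : A →* A ∗ B).range ⊓ stabilizer (A ∗ B) s₀

/-- The free complement of `leftStabilizer A B s₀` in the stabilizer of `s₀` that belongs to the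
transversal `t`. -/
def leftComplement (s₀ : S) (t : S → A ∗ B) : Subgroup (A ∗ B) :=
  Subgroup.closure ({g | ∃ a : A, ∃ s ∉ leftOrbit A B s₀, schreierCocycle t (inl a) s = g} ∪
    {g | ∃ (b : B) (s : S), schreierCocycle t (inr b) s = g})

theorem schreierCocycle_inl_mem_leftComplement {t : S → A ∗ B} (a : A) {s : S}
    (hs : s ∉ leftOrbit A B s₀) : schreierCocycle t (inl a) s ∈ leftComplement s₀ t :=
  Subgroup.subset_closure (.inl ⟨a, s, hs, rfl⟩)

theorem schreierCocycle_inr_mem_leftComplement {t : S → A ∗ B} (b : B) (s : S) :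
    schreierCocycle t (inr b) s ∈ leftComplement s₀ t :=
  Subgroup.subset_closure (.inr ⟨b, s, rfl⟩)

namespace IsAdaptedTransversal

variable {t : S → A ∗ B}

theorem schreierCocycle_inl_mem_leftStabilizer (ht : IsAdaptedTransversal s₀ t) (a : A) {s : S}
    (hs : s ∈ leftOrbit A B s₀) : schreierCocycle t (inl a) s ∈ leftStabilizer A B s₀ :=
  Subgroup.mem_inf.2
    ⟨mul_mem (mul_mem (inv_mem (ht.mem_range_inl (inl_smul_mem_leftOrbit_iff.2 hs))) ⟨a, rfl⟩)
      (ht.mem_range_inl hs), schreierCocycle_mem_stabilizer ht.smul_base _ _⟩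

theorem leftComplement_le_stabilizer (ht : IsAdaptedTransversal s₀ t) :
    leftComplement s₀ t ≤ stabilizer (A ∗ B) s₀ := by
  rw [leftComplement, Subgroup.closure_le]
  rintro _ (⟨a, s, -, rfl⟩ | ⟨b, s, rfl⟩) <;> exact schreierCocycle_mem_stabilizer ht.smul_base _ _

/-- A lift of the Schreier cocycle of `t` to the free product of `leftStabilizer A B s₀` and
`leftComplement s₀ t`, which sends each Schreier element of a letter to the obvious factor. -/
structure IsKuroshCocycle (ht : IsAdaptedTransversal s₀ t)
    (c : A ∗ B → S → leftStabilizer A B s₀ ∗ leftComplement s₀ t) : Prop where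
  isCocycle : IsCocycle (.id (A ∗ B)) c
  inl_of_mem (a : A) {s : S} (hs : s ∈ leftOrbit A B s₀) :
    c (inl a) s = inl ⟨_, ht.schreierCocycle_inl_mem_leftStabilizer a hs⟩
  inl_of_notMem (a : A) {s : S} (hs : s ∉ leftOrbit A B s₀) :
    c (inl a) s = inr ⟨_, schreierCocycle_inl_mem_leftComplement a hs⟩
  inr_apply (b : B) (s : S) : c (inr b) s = inr ⟨_, schreierCocycle_inr_mem_leftComplement b s⟩

theorem exists_isKuroshCocycle (ht : IsAdaptedTransversal s₀ t) : ∃ c, ht.IsKuroshCocycle c := by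
  classical
  let cA (a : A) (s : S) : leftStabilizer A B s₀ ∗ leftComplement s₀ t :=
    if hs : s ∈ leftOrbit A B s₀ then inl ⟨_, ht.schreierCocycle_inl_mem_leftStabilizer a hs⟩
    else inr ⟨_, schreierCocycle_inl_mem_leftComplement a hs⟩
  let cB (b : B) (s : S) : leftStabilizer A B s₀ ∗ leftComplement s₀ t :=
    inr ⟨_, schreierCocycle_inr_mem_leftComplement b s⟩
  have hA : IsCocycle (inl : A →* A ∗ B) cA := fun a a' s ↦ by
    have hγ := (isCocycle_schreierCocycle t).comp inl a a' s
    by_cases hs : s ∈ leftOrbit A B s₀ <;>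
      simp only [cA, inl_smul_mem_leftOrbit_iff, hs, dite_true, dite_false, hγ, ← map_mul] <;> rfl
  have hB : IsCocycle (inr : B →* A ∗ B) cB := fun b b' s ↦ by
    simp only [cB, (isCocycle_schreierCocycle t).comp inr b b' s, ← map_mul]; rfl
  obtain ⟨c, hc, hinl, hinr⟩ := hA.exists_coprod hB
  exact ⟨c, hc, fun a s hs ↦ by simp only [hinl, cA, hs, dite_true],
    fun a s hs ↦ by simp only [hinl, cA, hs, dite_false], fun b s ↦ by rw [hinr]⟩

namespace IsKuroshCocycle

variable {ht : IsAdaptedTransversal s₀ t}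
  {c : A ∗ B → S → leftStabilizer A B s₀ ∗ leftComplement s₀ t}

theorem lift_apply (hc : ht.IsKuroshCocycle c) (g : A ∗ B) (s : S) :
    lift (leftStabilizer A B s₀).subtype (leftComplement s₀ t).subtype (c g s) =
      schreierCocycle t g s := by
  refine (hc.isCocycle.map _).coprod_ext (isCocycle_schreierCocycle t) (fun a ↦ ?_) (fun b ↦ ?_) g s
  · ext s
    by_cases hs : s ∈ leftOrbit A B s₀
    · simp [hc.inl_of_mem a hs]
    · simp [hc.inl_of_notMem a hs]
  · ext s
    simp [hc.inr_apply]

theorem apply_leftStabilizer (hc : ht.IsKuroshCocycle c) (v : leftStabilizer A B s₀) :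
    c v s₀ = inl v := by
  obtain ⟨_, ⟨a, rfl⟩, ha⟩ := v
  rw [hc.inl_of_mem a base_mem_leftOrbit]
  simp only [schreierCocycle_of_mem_stabilizer ht.apply_base ha]

theorem apply_transversal_of_mem (hc : ht.IsKuroshCocycle c) {s : S}
    (hs : s ∈ leftOrbit A B s₀) : c (t s) s₀ = 1 := by
  have hγ := schreierCocycle_transversal ht.apply_base ht.smul_base s
  obtain ⟨a, ha⟩ := ht.mem_range_inl hs
  rw [← ha] at hγ ⊢
  rw [hc.inl_of_mem a base_mem_leftOrbit, ← map_one inl]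
  exact congrArg inl (Subtype.ext hγ)

theorem apply_mem_range_inr (hc : ht.IsKuroshCocycle c) {g : A ∗ B}
    (hg : IsAdmissible s₀ (t '' leftOrbit A B s₀) g) :
    c g s₀ ∈ (inr : _ →* leftStabilizer A B s₀ ∗ leftComplement s₀ t).range := by
  induction hg with
  | of_mem hg =>
    obtain ⟨s, hs, rfl⟩ := hg
    rw [hc.apply_transversal_of_mem hs]
    exact one_mem _
  | inl_mul a _ hs ih =>
    rw [hc.isCocycle, MonoidHom.id_apply, hc.inl_of_notMem a hs]
    exact mul_mem ⟨_, rfl⟩ ih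
  | inr_mul b _ ih =>
    rw [hc.isCocycle, MonoidHom.id_apply, hc.inr_apply]
    exact mul_mem ⟨_, rfl⟩ ih

theorem apply_transversal (hc : ht.IsKuroshCocycle c) (s : S) : c (t s) s₀ = 1 := by
  obtain ⟨n, hn⟩ := hc.apply_mem_range_inr (ht.isAdmissible s)
  have hn_one : n = 1 := Subtype.ext <| by
    have := hc.lift_apply (t s) s₀
    rwa [← hn, lift_apply_inr, schreierCocycle_transversal ht.apply_base ht.smul_base] at this
  rw [← hn, hn_one, map_one]

theorem apply_schreierCocycle (hc : ht.IsKuroshCocycle c) (g : A ∗ B) (s : S) :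
    c (schreierCocycle t g s) s₀ = c g s := by
  have hinv : c (t (g • s))⁻¹ (g • s) = 1 := by
    have := hc.isCocycle.inv_apply_smul (t (g • s)) s₀
    rwa [MonoidHom.id_apply, ht.smul_base, hc.apply_transversal, inv_one] at this
  rw [schreierCocycle, hc.isCocycle, hc.isCocycle, MonoidHom.id_apply, MonoidHom.id_apply,
    ht.smul_base, hinv, hc.apply_transversal, one_mul, mul_one]

theorem stabilizerHom_comp_inclusion_leftComplement (hc : ht.IsKuroshCocycle c) :
    (hc.isCocycle.stabilizerHom s₀).comp (Subgroup.inclusion ht.leftComplement_le_stabilizer) =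
      inr := by
  refine MonoidHom.eq_of_eqOn_dense Subgroup.closure_closure_coe_preimage ?_
  rintro ⟨_, _⟩ (⟨a, s, hs, rfl⟩ | ⟨b, s, rfl⟩)
  · exact (hc.apply_schreierCocycle _ s).trans (hc.inl_of_notMem a hs)
  · exact (hc.apply_schreierCocycle _ s).trans (hc.inr_apply b s)

end IsKuroshCocycle

end IsAdaptedTransversal

variable (A B) in
theorem isFreeFactor_leftStabilizer_stabilizer [IsPretransitive (A ∗ B) S] (s₀ : S) :
    IsFreeFactor (leftStabilizer A B s₀) (stabilizer (A ∗ B) s₀) := by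
  obtain ⟨t, ht⟩ := exists_isAdaptedTransversal A B s₀
  obtain ⟨c, hc⟩ := ht.exists_isKuroshCocycle
  have hV : leftStabilizer A B s₀ ≤ stabilizer (A ∗ B) s₀ := inf_le_right
  have hN := ht.leftComplement_le_stabilizer
  let r := hc.isCocycle.stabilizerHom s₀
  let i := lift (Subgroup.inclusion hV) (Subgroup.inclusion hN)
  have r_comp_i : r.comp i = .id _ :=
    hom_ext (MonoidHom.ext hc.apply_leftStabilizer) hc.stabilizerHom_comp_inclusion_leftComplement
  have subtype_comp_i : (stabilizer (A ∗ B) s₀).subtype.comp i =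
      lift (leftStabilizer A B s₀).subtype (leftComplement s₀ t).subtype := hom_ext rfl rfl
  have i_r (m : stabilizer (A ∗ B) s₀) : i (r m) = m := Subtype.ext <|
    calc (i (r m) : A ∗ B) = lift _ _ (c m s₀) := DFunLike.congr_fun subtype_comp_i _
      _ = schreierCocycle t m s₀ := hc.lift_apply _ _
      _ = m := schreierCocycle_of_mem_stabilizer ht.apply_base m.2
  exact ⟨hV, leftComplement s₀ t, hN,
    bijective_iff_has_inverse.2 ⟨r, DFunLike.congr_fun r_comp_i, i_r⟩⟩

theorem isFreeFactor_range_inl_inf (M : Subgroup (A ∗ B)) :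
    IsFreeFactor ((inl : A →* A ∗ B).range ⊓ M) M := by
  simpa only [leftStabilizer, stabilizer_quotient] using
    isFreeFactor_leftStabilizer_stabilizer A B ((1 : A ∗ B) : (A ∗ B) ⧸ M)

end Kurosh

section Intersection

variable {G : Type*} [Group G] {H K H' K' M : Subgroup G}

theorem IsFreeFactor.inf_of_le (h : IsFreeFactor H K) (hM : M ≤ K) : IsFreeFactor (H ⊓ M) M := by
  obtain ⟨L, f, hf, hinl, rfl⟩ := h.exists_injective
  have hfM : (M.comap f).map f = M := by
    rw [Subgroup.map_comap_eq, inf_eq_right.2 hM]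
  have h := (isFreeFactor_range_inl_inf (M.comap f)).map hf
  rwa [Subgroup.map_inf _ _ _ hf, hfM, MonoidHom.map_range, hinl, H.range_subtype] at h

theorem IsFreeFactor.inf (h : IsFreeFactor H K) (h' : IsFreeFactor H' K') :
    IsFreeFactor (H ⊓ H') (K ⊓ K') := by
  have inf_right : IsFreeFactor (H ⊓ K') (K ⊓ K') := by
    have := h.inf_of_le (inf_le_left : K ⊓ K' ≤ K)
    rwa [← inf_assoc, inf_eq_left.2 h.le] at this
  have inf_left : IsFreeFactor (H ⊓ H') (H ⊓ K') := by
    have := h'.inf_of_le (inf_le_right : H ⊓ K' ≤ K')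
    rwa [inf_left_comm, inf_eq_left.2 h'.le] at this
  exact inf_left.trans inf_right

theorem iInf_isFreeFactor_iInf_general {ι : Type*} [Finite ι] (H K : ι → Subgroup G)
    (h : ∀ i, IsFreeFactor (H i) (K i)) : IsFreeFactor (⨅ i, H i) (⨅ i, K i) := by
  have infClosed : InfClosed {p : Subgroup G × Subgroup G | IsFreeFactor p.1 p.2} :=
    fun _ hp _ hq ↦ IsFreeFactor.inf hp hq
  have := infClosed.iInf_mem (f := fun i ↦ (H i, K i)) (IsFreeFactor.refl ⊤) h
  simpa only [Set.mem_ofPred_eq, Prod.fst_iInf, Prod.snd_iInf] using this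

end Intersection

/-- If `H i` is a free factor of `K i` for each `i` in a finite nonempty index set,
then `⋂ H i` is a free factor of `⋂ K i`. -/
theorem iInf_isFreeFactor_iInf {A : Type*} {ι : Type*} [Finite ι] [Nonempty ι]
    (H K : ι → Subgroup (FreeGroup A)) (h : ∀ i, IsFreeFactor (H i) (K i)) :
    IsFreeFactor (⨅ i, H i) (⨅ i, K i) :=
  iInf_isFreeFactor_iInf_general H K h
end

section
/- Let H be a finitely generated subgroup of a free group F = FreeGroup A. Then the set AE(H) = {K : Subgroup F | H ≤alg K} of algebraic extensions of H is finite, and every K ∈ AE(H) is finitely generated (Takahasi's theorem). -/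
/-- `H ≤alg K`: the extension `H ≤ K` is algebraic, i.e. `H` is contained in no
proper free factor of `K`. -/
def IsAlgebraicExtension {G : Type*} [Group G] (H K : Subgroup G) : Prop :=
  H ≤ K ∧ ∀ L : Subgroup G, H ≤ L → IsFreeFactor L K → L = K

/-!
Let `P` be a set of vertices, containing `1`, that is connected in the Cayley graph of the free
group `F`. For every `K ≤ F` the loops `p⁻¹ * q ∈ K` with `p, q ∈ P` generate a free factor of `K`:
in the language of Stallings, the fundamental group of a connected subgraph of the Schreier graph
of `F ⧸ K` is a free factor of the fundamental group of the whole graph. Indeed `P` can be enlarged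
to meet every coset without creating loops. Label an edge of the Schreier graph by its Schreier
generator, taken in the factor `L` spanned by the loops of `P` or in the factor `M` spanned by the
remaining Schreier generators, according to whether the edge comes from `P`. Multiplying labels
along closed paths gives a homomorphism `K →* L ∗ M` inverse to the canonical one.

If `P` contains a generating set of `H`, this free factor contains `H`, so it is all of an algebraic
extension `K`. For finite `P` there are only finitely many sets of generators `p⁻¹ * q`.
-/

open Monoid SimpleGraph
open scoped Pointwise

namespace Takahasi

section Holonomy

variable {A X G : Type*} [Group G] [MulAction (FreeGroup A) X]

/-- The homomorphism encoding a labelling `c` of the edges of the Schreier graph of `X`, where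
`c a x` is the label of the edge `x ⟶ a • x`. In `(X → G) ⋊ FreeGroup A` the first component of
the image of `a` is indexed by the endpoints of these edges. -/
def labelHom (c : A → X → G) : FreeGroup A →* (X → G) ⋊[mulAutArrow] FreeGroup A :=
  FreeGroup.lift fun a => ⟨fun y => c a ((FreeGroup.of a)⁻¹ • y), FreeGroup.of a⟩

/-- The product of the labels along the path that starts at `x` and spells `g`, from right to
left, in the Schreier graph of `X` with labels `c`. -/
def holonomy (c : A → X → G) (g : FreeGroup A) (x : X) : G :=
  (labelHom c g).left (g • x)

variable (c : A → X → G)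

@[simp]
theorem labelHom_right (g : FreeGroup A) : (labelHom c g).right = g :=
  DFunLike.congr_fun (f := SemidirectProduct.rightHom.comp (labelHom c)) (g := MonoidHom.id _)
    (FreeGroup.ext_hom _ _ fun a => by simp [labelHom]) g

@[simp]
theorem holonomy_of (a : A) (x : X) : holonomy c (FreeGroup.of a) x = c a x := by
  simp [holonomy, labelHom]

theorem holonomy_mul (g h : FreeGroup A) (x : X) :
    holonomy c (g * h) x = holonomy c g (h • x) * holonomy c h x := by
  have left_mul : (labelHom c (g * h)).left (g • h • x) =
      (labelHom c g).left (g • h • x) * (labelHom c h).left (g⁻¹ • g • h • x) := by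
    rw [map_mul, SemidirectProduct.mul_left, labelHom_right]
    rfl
  rw [holonomy, holonomy, holonomy, mul_smul, left_mul, inv_smul_smul]

@[simp]
theorem holonomy_one (x : X) : holonomy c 1 x = 1 := by
  simp [holonomy]

theorem holonomy_inv (g : FreeGroup A) (x : X) :
    holonomy c g⁻¹ x = (holonomy c g (g⁻¹ • x))⁻¹ := by
  refine eq_inv_of_mul_eq_one_right ?_
  rw [← holonomy_mul, mul_inv_cancel, holonomy_one]

/-- The holonomy of the loops at `x`. -/
def holonomyHom (c : A → X → G) (x : X) : MulAction.stabilizer (FreeGroup A) x →* G :=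
  MonoidHom.mk' (fun g => holonomy c g x) fun g h => by
    rw [Subgroup.coe_mul, holonomy_mul, MulAction.mem_stabilizer_iff.1 h.2]

/-- The Schreier generator of the edge `x ⟶ a • x`, where `t` chooses a path from a base point to
each vertex: it spells the loop that follows `t x`, the edge, and then `t (a • x)` backwards. -/
def schreierGen (t : X → FreeGroup A) (a : A) (x : X) : FreeGroup A :=
  (t (FreeGroup.of a • x))⁻¹ * FreeGroup.of a * t x

variable {c} in
theorem map_holonomy_of_map_eq_schreierGen {t : X → FreeGroup A} (f : G →* FreeGroup A)
    (hf : ∀ a x, f (c a x) = schreierGen t a x) (g : FreeGroup A) (x : X) :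
    f (holonomy c g x) = (t (g • x))⁻¹ * g * t x := by
  induction g using FreeGroup.induction_on generalizing x with
  | C1 => simp
  | of a => rw [holonomy_of, hf, schreierGen]
  | inv_of a ih => rw [holonomy_inv, map_inv, ih, smul_inv_smul]; group
  | mul g h ihg ihh => rw [holonomy_mul, map_mul, ihg, ihh, mul_smul]; group

end Holonomy

section FreeFactor

variable {G : Type*} [Group G]

theorem isFreeFactor_of_inverse {K L M : Subgroup G} (hL : L ≤ K) (hM : M ≤ K)
    (φ : K →* Coprod L M) (φ_left : ∀ l : L, φ (Subgroup.inclusion hL l) = Coprod.inl l)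
    (φ_right : ∀ m : M, φ (Subgroup.inclusion hM m) = Coprod.inr m)
    (hφ : ∀ k, Coprod.lift L.subtype M.subtype (φ k) = k) : IsFreeFactor L K := by
  let ψ := Coprod.lift (Subgroup.inclusion hL) (Subgroup.inclusion hM)
  have φ_comp_ψ : φ.comp ψ = MonoidHom.id _ :=
    Coprod.hom_ext (MonoidHom.ext φ_left) (MonoidHom.ext φ_right)
  have subtype_comp_ψ : K.subtype.comp ψ = Coprod.lift L.subtype M.subtype :=
    Coprod.hom_ext rfl rfl
  exact ⟨hL, M, hM, Function.bijective_iff_has_inverse.2 ⟨φ, DFunLike.congr_fun φ_comp_ψ,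
    fun k => Subtype.ext ((DFunLike.congr_fun subtype_comp_ψ (φ k)).trans (hφ k))⟩⟩

theorem hom_eq_of_eqOn_generators {N : Type*} [Monoid N] {s : Set G}
    {f g : Subgroup.closure s →* N}
    (h : ∀ x (hx : x ∈ s), f ⟨x, Subgroup.subset_closure hx⟩ = g ⟨x, Subgroup.subset_closure hx⟩) :
    f = g :=
  MonoidHom.eq_of_eqOn_dense Subgroup.closure_closure_coe_preimage fun x hx => h x hx

end FreeFactor

section LoopSubgroup

variable {G : Type*} [Group G] {K : Subgroup G} {P Q : Set G}

/-- The subgroup of `K` generated by the loops of the form `p⁻¹ * q` with `p, q ∈ P`. When `G` is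
free and `P` is a connected set of vertices of its Cayley graph containing `1`, this is the
fundamental group of the image of `P` in the Schreier graph of `G ⧸ K`. -/
def loopSubgroup (K : Subgroup G) (P : Set G) : Subgroup G :=
  Subgroup.closure (K ∩ (P⁻¹ * P))

theorem loopSubgroup_le_iff {L : Subgroup G} :
    loopSubgroup K P ≤ L ↔ ∀ p ∈ P, ∀ q ∈ P, p⁻¹ * q ∈ K → p⁻¹ * q ∈ L := by
  refine (Subgroup.closure_le L).trans ⟨fun h p hp q hq hK => ?_, ?_⟩
  · exact h ⟨hK, Set.mul_mem_mul (Set.inv_mem_inv.2 hp) hq⟩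
  · rintro h _ ⟨hK, p, hp, q, hq, rfl⟩
    simpa using h p⁻¹ hp q hq (by simpa using hK)

theorem loopSubgroup_le : loopSubgroup K P ≤ K :=
  loopSubgroup_le_iff.2 fun _ _ _ _ h => h

theorem inv_mul_mem_loopSubgroup {p q : G} (hp : p ∈ P) (hq : q ∈ P)
    (h : (p : G ⧸ K) = q) : p⁻¹ * q ∈ loopSubgroup K P :=
  loopSubgroup_le_iff.1 le_rfl p hp q hq (QuotientGroup.eq.1 h)

theorem loopSubgroup_mono (h : P ⊆ Q) : loopSubgroup K P ≤ loopSubgroup K Q :=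
  Subgroup.closure_mono <| Set.inter_subset_inter_right _ <|
    Set.mul_subset_mul (Set.inv_subset_inv.2 h) h

theorem loopSubgroup_insert_le {w : G} (hw : (w : G ⧸ K) ∉ ((↑) : G → G ⧸ K) '' P) :
    loopSubgroup K (insert w P) ≤ loopSubgroup K P := by
  refine loopSubgroup_le_iff.2 ?_
  rintro p (rfl | hp) q (rfl | hq) hpq <;> rw [← QuotientGroup.eq] at hpq
  · simp
  · exact absurd ⟨q, hq, hpq.symm⟩ hw
  · exact absurd ⟨p, hp, hpq⟩ hw
  · exact inv_mul_mem_loopSubgroup hp hq hpq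

theorem loopSubgroup_sUnion_le {L : Subgroup G} {C : Set (Set G)}
    (hC : IsChain (· ⊆ ·) C) (h : ∀ Q ∈ C, loopSubgroup K Q ≤ L) : loopSubgroup K (⋃₀ C) ≤ L := by
  refine loopSubgroup_le_iff.2 ?_
  rintro p ⟨Q, hQ, hp⟩ q ⟨R, hR, hq⟩ hpq
  obtain hQR | hRQ := hC.total hQ hR
  · exact loopSubgroup_le_iff.1 (h R hR) p (hQR hp) q hq hpq
  · exact loopSubgroup_le_iff.1 (h Q hQ) p hp q (hRQ hq) hpq

theorem fg_loopSubgroup (hP : P.Finite) : (loopSubgroup K P).FG :=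
  (Subgroup.fg_iff _).2 ⟨_, rfl, (hP.inv.mul hP).subset Set.inter_subset_right⟩

theorem finite_range_loopSubgroup (hP : P.Finite) :
    (Set.range fun K : Subgroup G => loopSubgroup K P).Finite := by
  refine ((hP.inv.mul hP).finite_subsets.image Subgroup.closure).subset ?_
  rintro _ ⟨K, rfl⟩
  exact ⟨_, Set.inter_subset_right, rfl⟩

end LoopSubgroup

section CayleyGraph

variable {A : Type*}

variable (A) in
/-- The Cayley graph of `FreeGroup A` with edges `p ⟶ a * p`. Generators act on the left, unlike in
`SimpleGraph.mulCayley`, so that the graph maps to the Schreier graph of left cosets. -/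
def leftCayley : SimpleGraph (FreeGroup A) :=
  fromRel fun p q => ∃ a, FreeGroup.of a * p = q

theorem leftCayley_adj_of_mul (a : A) (p : FreeGroup A) :
    (leftCayley A).Adj p (FreeGroup.of a * p) := by
  refine (fromRel_adj _ _ _).2 ⟨?_, .inl ⟨a, rfl⟩⟩
  simp

theorem leftCayley_adj_mul_right {p q : FreeGroup A} (h : (leftCayley A).Adj p q)
    (g : FreeGroup A) : (leftCayley A).Adj (p * g) (q * g) := by
  obtain ⟨-, ⟨a, rfl⟩ | ⟨a, rfl⟩⟩ := (fromRel_adj _ _ _).1 h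
  · rw [mul_assoc]
    exact leftCayley_adj_of_mul a _
  · rw [mul_assoc]
    exact (leftCayley_adj_of_mul a _).symm

theorem leftCayley_preconnected : (leftCayley A).Preconnected := by
  have reachable_mul (g p : FreeGroup A) : (leftCayley A).Reachable p (g * p) := by
    induction g using FreeGroup.induction_on generalizing p with
    | C1 => rw [one_mul]
    | of a => exact (leftCayley_adj_of_mul a p).reachable
    | inv_of a ih => simpa using (ih ((FreeGroup.of a)⁻¹ * p)).symm
    | mul g h ihg ihh => simpa only [mul_assoc] using (ihh p).trans (ihg (h * p))
  intro p q
  simpa using reachable_mul (q * p⁻¹) p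

theorem exists_finite_connected_superset {S : Set (FreeGroup A)} (hS : S.Finite) :
    ∃ P, P.Finite ∧ 1 ∈ P ∧ S ⊆ P ∧ ((leftCayley A).induce P).Connected := by
  obtain ⟨P, hSP, hP⟩ := extend_finset_to_connected leftCayley_preconnected
    (t := (hS.insert 1).toFinset) ((hS.insert 1).toFinset_nonempty.2 (Set.insert_nonempty 1 S))
  rw [Set.Finite.toFinset_subset, Set.insert_subset_iff] at hSP
  exact ⟨P, P.finite_toSet, hSP.1, hSP.2, hP⟩

theorem connected_induce_insert {V : Type*} {Γ : SimpleGraph V} {s : Set V} {v w : V}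
    (hs : (Γ.induce s).Connected) (hv : v ∈ s) (h : Γ.Adj v w) :
    (Γ.induce (insert w s)).Connected := by
  rw [← Set.union_singleton]
  exact connected_induce_union hs.preconnected Preconnected.of_subsingleton hv rfl h

theorem connected_induce_sUnion_of_isChain {V : Type*} {Γ : SimpleGraph V} {C : Set (Set V)}
    (hC : IsChain (· ⊆ ·) C) (hne : C.Nonempty) (h : ∀ s ∈ C, (Γ.induce s).Connected) :
    (Γ.induce (⋃₀ C)).Connected := by
  refine induce_sUnion_connected_of_pairwise_not_disjoint hne (fun {s t} hs ht => ?_) (h _)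
  have hs_nonempty : s.Nonempty := Set.nonempty_coe_sort.1 (h s hs).nonempty
  have ht_nonempty : t.Nonempty := Set.nonempty_coe_sort.1 (h t ht).nonempty
  obtain hst | hts := hC.total hs ht
  · rwa [Set.inter_eq_left.2 hst]
  · rwa [Set.inter_eq_right.2 hts]

variable {K : Subgroup (FreeGroup A)} {P : Set (FreeGroup A)}

theorem exists_adj_notMem_image_mk (hP : P.Nonempty) {x : FreeGroup A ⧸ K}
    (hx : x ∉ ((↑) : FreeGroup A → FreeGroup A ⧸ K) '' P) :
    ∃ p ∈ P, ∃ q, (leftCayley A).Adj p q ∧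
      (q : FreeGroup A ⧸ K) ∉ ((↑) : FreeGroup A → FreeGroup A ⧸ K) '' P := by
  obtain ⟨p₀, hp₀⟩ := hP
  obtain ⟨g, rfl⟩ := QuotientGroup.mk_surjective x
  obtain ⟨walk⟩ := leftCayley_preconnected p₀ g
  obtain ⟨d, -, ⟨p, hp, hpd⟩, hd⟩ := walk.exists_boundary_dart
    {g | (g : FreeGroup A ⧸ K) ∈ ((↑) : FreeGroup A → FreeGroup A ⧸ K) '' P} ⟨p₀, hp₀, rfl⟩ hx
  have hK : d.fst⁻¹ * p ∈ K := QuotientGroup.eq.1 hpd.symm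
  refine ⟨p, hp, d.snd * (d.fst⁻¹ * p), ?_, ?_⟩
  · simpa using leftCayley_adj_mul_right d.adj (d.fst⁻¹ * p)
  · rwa [QuotientGroup.mk_mul_of_mem _ hK]

-- A maximal extension without new loops meets every coset: otherwise some edge leaves its image,
-- and adding the far endpoint of that edge creates no loop.
theorem exists_connected_superset_surjOn (K : Subgroup (FreeGroup A))
    (hP : ((leftCayley A).induce P).Connected) :
    ∃ Q, P ⊆ Q ∧ ((leftCayley A).induce Q).Connected ∧
      Set.SurjOn ((↑) : FreeGroup A → FreeGroup A ⧸ K) Q Set.univ ∧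
      loopSubgroup K Q = loopSubgroup K P := by
  obtain ⟨Q, hPQ, hQ⟩ := zorn_subset_nonempty
    {Q | ((leftCayley A).induce Q).Connected ∧ loopSubgroup K Q ≤ loopSubgroup K P}
    (fun C hC hchain hne => ⟨⋃₀ C,
      ⟨connected_induce_sUnion_of_isChain hchain hne fun Q hQ => (hC hQ).1,
        loopSubgroup_sUnion_le hchain fun Q hQ => (hC hQ).2⟩,
      fun _ => Set.subset_sUnion_of_mem⟩) P ⟨hP, le_rfl⟩
  refine ⟨Q, hPQ, hQ.prop.1, fun x _ => ?_, hQ.prop.2.antisymm (loopSubgroup_mono hPQ)⟩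
  by_contra hx
  obtain ⟨p, hp, q, hpq, hq⟩ := exists_adj_notMem_image_mk
    (Set.nonempty_coe_sort.1 hQ.prop.1.nonempty) hx
  have hqQ : q ∈ Q := hQ.le_of_ge ⟨connected_induce_insert hQ.prop.1 hp hpq,
    (loopSubgroup_insert_le hq).trans hQ.prop.2⟩ (Set.subset_insert q Q) (Set.mem_insert q Q)
  exact hq ⟨q, hqQ, rfl⟩

end CayleyGraph

section Complement

variable {A : Type*} {K : Subgroup (FreeGroup A)} {P : Set (FreeGroup A)}

variable (K P) in
/-- The image in the Schreier graph of `FreeGroup A ⧸ K` of the Cayley graph edges between vertices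
of `P`; the pair `(a, x)` stands for the edge `x ⟶ a • x`. -/
def imageEdges : Set (A × FreeGroup A ⧸ K) :=
  {e | ∃ p ∈ P, FreeGroup.of e.1 * p ∈ P ∧ (p : FreeGroup A ⧸ K) = e.2}

theorem holonomy_mem_of_connected {G : Type*} [Group G] {c : A → FreeGroup A ⧸ K → G}
    {R : Subgroup G} (hP : ((leftCayley A).induce P).Connected) (h1 : 1 ∈ P)
    (hc : ∀ a x, (a, x) ∈ imageEdges K P → c a x ∈ R) {p : FreeGroup A} (hp : p ∈ P) :
    holonomy c p (1 : FreeGroup A) ∈ R := by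
  have step (a : A) (q : FreeGroup A) (hq : q ∈ P) (haq : FreeGroup.of a * q ∈ P) :
      holonomy c (FreeGroup.of a * q) (1 : FreeGroup A) ∈ R ↔
        holonomy c q (1 : FreeGroup A) ∈ R := by
    rw [holonomy_mul, holonomy_of, MulAction.Quotient.smul_coe, smul_eq_mul, mul_one]
    exact R.mul_mem_cancel_left (hc a q ⟨q, hq, haq, rfl⟩)
  suffices mem : ∀ q : P, holonomy c q (1 : FreeGroup A) ∈ R from mem ⟨p, hp⟩
  intro q
  induction (reachable_iff_reflTransGen _ _).1 (hP.preconnected ⟨1, h1⟩ q) with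
  | refl => simp
  | @tail q r _ hqr ih =>
    obtain ⟨-, ⟨a, hr⟩ | ⟨a, hq⟩⟩ := (fromRel_adj _ _ _).1 (induce_adj.1 hqr)
    · exact hr ▸ (step a q q.2 (hr ▸ r.2)).2 ih
    · exact (step a r r.2 (hq ▸ q.2)).1 (hq ▸ ih)

variable (K P) in
/-- A choice `t` of coset representatives in `P`, with `1` representing `K`. -/
structure IsPointedTransversal (t : FreeGroup A ⧸ K → FreeGroup A) : Prop where
  mk_apply (x : FreeGroup A ⧸ K) : (t x : FreeGroup A ⧸ K) = x
  mem (x : FreeGroup A ⧸ K) : t x ∈ P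
  apply_one : t (1 : FreeGroup A) = 1

theorem exists_isPointedTransversal (h1 : 1 ∈ P)
    (hP : Set.SurjOn ((↑) : FreeGroup A → FreeGroup A ⧸ K) P Set.univ) :
    ∃ t, IsPointedTransversal K P t := by
  classical
  choose t htP ht using fun x : FreeGroup A ⧸ K => hP (Set.mem_univ x)
  refine ⟨Function.update t (1 : FreeGroup A) 1, fun x => ?_, fun x => ?_, by simp⟩ <;>
    obtain rfl | hx := eq_or_ne x (1 : FreeGroup A) <;> simp [*]

/-- The subgroup generated by the Schreier generators of the edges outside the image of `P`. It is
the free complement of `loopSubgroup K P` when `P` is connected and meets every coset. -/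
def complement (P : Set (FreeGroup A)) (t : FreeGroup A ⧸ K → FreeGroup A) :
    Subgroup (FreeGroup A) :=
  Subgroup.closure {g | ∃ a x, (a, x) ∉ imageEdges K P ∧ schreierGen t a x = g}

namespace IsPointedTransversal

variable {t : FreeGroup A ⧸ K → FreeGroup A} (ht : IsPointedTransversal K P t)
include ht

theorem schreierGen_mem (a : A) (x : FreeGroup A ⧸ K) : schreierGen t a x ∈ K := by
  rw [schreierGen, mul_assoc, ← QuotientGroup.eq, ht.mk_apply, ← smul_eq_mul,
    ← MulAction.Quotient.smul_coe, ht.mk_apply]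

theorem complement_le : complement P t ≤ K := by
  rw [complement, Subgroup.closure_le]
  rintro _ ⟨a, x, -, rfl⟩
  exact ht.schreierGen_mem a x

theorem schreierGen_mem_loopSubgroup {a : A} {x : FreeGroup A ⧸ K}
    (h : (a, x) ∈ imageEdges K P) : schreierGen t a x ∈ loopSubgroup K P := by
  obtain ⟨p, hp, hap, rfl : (p : FreeGroup A ⧸ K) = x⟩ := h
  have start_mem : p⁻¹ * t p ∈ loopSubgroup K P :=
    inv_mul_mem_loopSubgroup hp (ht.mem _) (ht.mk_apply _).symm
  have end_mem : (t (FreeGroup.of a * p : FreeGroup A))⁻¹ * (FreeGroup.of a * p) ∈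
      loopSubgroup K P :=
    inv_mul_mem_loopSubgroup (ht.mem _) hap (ht.mk_apply _)
  convert mul_mem end_mem start_mem using 1
  rw [schreierGen, MulAction.Quotient.smul_coe, smul_eq_mul]
  group

open Classical in
/-- Labels each edge by its Schreier generator, put in the factor `loopSubgroup K P` or
`complement P t` according to whether the edge lies in the image of `P`. -/
noncomputable def edgeLabel (a : A) (x : FreeGroup A ⧸ K) :
    Coprod (loopSubgroup K P) (complement P t) :=
  if h : (a, x) ∈ imageEdges K P then Coprod.inl ⟨_, ht.schreierGen_mem_loopSubgroup h⟩
  else Coprod.inr ⟨schreierGen t a x, Subgroup.subset_closure ⟨a, x, h, rfl⟩⟩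

theorem lift_edgeLabel (a : A) (x : FreeGroup A ⧸ K) :
    Coprod.lift (loopSubgroup K P).subtype (complement P t).subtype (ht.edgeLabel a x) =
      schreierGen t a x := by
  unfold edgeLabel
  split_ifs <;> rfl

theorem lift_holonomy_edgeLabel (g : FreeGroup A) (x : FreeGroup A ⧸ K) :
    Coprod.lift (loopSubgroup K P).subtype (complement P t).subtype
      (holonomy ht.edgeLabel g x) = (t (g • x))⁻¹ * g * t x :=
  map_holonomy_of_map_eq_schreierGen _ ht.lift_edgeLabel g x

variable (hP : ((leftCayley A).induce P).Connected) (h1 : 1 ∈ P)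
include hP h1

theorem holonomy_edgeLabel_of_mem {p : FreeGroup A} (hp : p ∈ P) :
    holonomy ht.edgeLabel p (1 : FreeGroup A) =
      Coprod.inl ⟨(t p)⁻¹ * p, inv_mul_mem_loopSubgroup (ht.mem _) hp (ht.mk_apply _)⟩ := by
  obtain ⟨l, hl⟩ : holonomy ht.edgeLabel p (1 : FreeGroup A) ∈ Coprod.inl.range :=
    holonomy_mem_of_connected hP h1 (fun a x hx => by simp [edgeLabel, hx]) hp
  have lift_eq := ht.lift_holonomy_edgeLabel p (1 : FreeGroup A)
  rw [← hl, Coprod.lift_apply_inl, MulAction.Quotient.smul_coe, smul_eq_mul, mul_one, ht.apply_one,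
    mul_one] at lift_eq
  rw [← hl]
  exact congrArg _ (Subtype.ext lift_eq)

theorem holonomy_edgeLabel_apply (x : FreeGroup A ⧸ K) :
    holonomy ht.edgeLabel (t x) (1 : FreeGroup A) = 1 := by
  rw [ht.holonomy_edgeLabel_of_mem hP h1 (ht.mem x)]
  simp only [ht.mk_apply, inv_mul_cancel]
  exact map_one _

theorem holonomy_edgeLabel_schreierGen (a : A) (x : FreeGroup A ⧸ K) :
    holonomy ht.edgeLabel (schreierGen t a x) (1 : FreeGroup A) = ht.edgeLabel a x := by
  have apply_smul_one (y : FreeGroup A ⧸ K) : t y • ((1 : FreeGroup A) : FreeGroup A ⧸ K) = y := by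
    rw [MulAction.Quotient.smul_coe, smul_eq_mul, mul_one, ht.mk_apply]
  have inv_apply_smul (y : FreeGroup A ⧸ K) : (t y)⁻¹ • y = ((1 : FreeGroup A) : FreeGroup A ⧸ K) :=
    inv_smul_eq_iff.2 (apply_smul_one y).symm
  rw [schreierGen, mul_assoc, holonomy_mul, holonomy_mul, holonomy_of, mul_smul, apply_smul_one,
    holonomy_inv, inv_apply_smul, ht.holonomy_edgeLabel_apply hP h1,
    ht.holonomy_edgeLabel_apply hP h1, inv_one, one_mul, mul_one]

theorem holonomy_edgeLabel_inv_mul {p q : FreeGroup A} (hp : p ∈ P) (hq : q ∈ P)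
    (hpq : (p : FreeGroup A ⧸ K) = q) :
    holonomy ht.edgeLabel (p⁻¹ * q) (1 : FreeGroup A) =
      Coprod.inl ⟨p⁻¹ * q, inv_mul_mem_loopSubgroup hp hq hpq⟩ := by
  rw [holonomy_mul, holonomy_inv, MulAction.Quotient.smul_coe, smul_eq_mul, mul_one, ← hpq,
    MulAction.Quotient.smul_coe, smul_eq_mul, inv_mul_cancel,
    ht.holonomy_edgeLabel_of_mem hP h1 hp, ht.holonomy_edgeLabel_of_mem hP h1 hq, ← map_inv,
    ← map_mul]
  refine congrArg _ (Subtype.ext ?_)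
  simp [hpq, mul_assoc]

theorem isFreeFactor_loopSubgroup : IsFreeFactor (loopSubgroup K P) K := by
  let φ : K →* Coprod (loopSubgroup K P) (complement P t) :=
    (holonomyHom ht.edgeLabel (1 : FreeGroup A)).comp
      (Subgroup.inclusion (MulAction.stabilizer_quotient K).ge)
  have φ_comp_inl : φ.comp (Subgroup.inclusion loopSubgroup_le) = Coprod.inl := by
    refine hom_eq_of_eqOn_generators ?_
    rintro _ ⟨hK, p, hp, q, hq, rfl⟩
    have hpq : ((p⁻¹ : FreeGroup A) : FreeGroup A ⧸ K) = q :=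
      QuotientGroup.eq.2 (by simpa using hK)
    have holonomy_eq := ht.holonomy_edgeLabel_inv_mul hP h1 hp hq hpq
    simp only [inv_inv] at holonomy_eq
    exact holonomy_eq
  have φ_comp_inr : φ.comp (Subgroup.inclusion ht.complement_le) = Coprod.inr := by
    refine hom_eq_of_eqOn_generators ?_
    rintro _ ⟨a, x, hax, rfl⟩
    exact (ht.holonomy_edgeLabel_schreierGen hP h1 a x).trans (dif_neg hax)
  refine isFreeFactor_of_inverse loopSubgroup_le ht.complement_le φ
    (DFunLike.congr_fun φ_comp_inl) (DFunLike.congr_fun φ_comp_inr) fun k => ?_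
  have smul_one : (k : FreeGroup A) • ((1 : FreeGroup A) : FreeGroup A ⧸ K) = (1 : FreeGroup A) :=
    (MulAction.stabilizer_quotient K).ge k.2
  refine (ht.lift_holonomy_edgeLabel k (1 : FreeGroup A)).trans ?_
  rw [smul_one, ht.apply_one, inv_one, one_mul, mul_one]

end IsPointedTransversal

theorem isFreeFactor_loopSubgroup (K : Subgroup (FreeGroup A))
    (hP : ((leftCayley A).induce P).Connected) (h1 : 1 ∈ P) :
    IsFreeFactor (loopSubgroup K P) K := by
  obtain ⟨Q, hPQ, hQ, hQ_surj, hQP⟩ := exists_connected_superset_surjOn K hP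
  obtain ⟨t, ht⟩ := exists_isPointedTransversal (hPQ h1) hQ_surj
  exact hQP ▸ ht.isFreeFactor_loopSubgroup hQ (hPQ h1)

end Complement

theorem eq_loopSubgroup_of_isAlgebraicExtension {A : Type*} {K : Subgroup (FreeGroup A)}
    {P S : Set (FreeGroup A)} (hP : ((leftCayley A).induce P).Connected) (h1 : 1 ∈ P) (hS : S ⊆ P)
    (hK : IsAlgebraicExtension (Subgroup.closure S) K) : loopSubgroup K P = K := by
  refine hK.2 _ ((Subgroup.closure_le _).2 fun g hg => ?_) (isFreeFactor_loopSubgroup K hP h1)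
  have hgK : g ∈ K := hK.1 (Subgroup.subset_closure hg)
  exact Subgroup.subset_closure ⟨hgK, 1, by simpa using h1, g, hS hg, one_mul g⟩

end Takahasi

/-- **Takahasi's theorem**: the set of algebraic extensions of a finitely generated
subgroup of a free group is finite, and each algebraic extension is finitely
generated. -/
theorem takahasi_algebraic_extensions_finite {A : Type*}
    (H : Subgroup (FreeGroup A)) (hH : H.FG) :
    {K : Subgroup (FreeGroup A) | IsAlgebraicExtension H K}.Finite ∧
      ∀ K : Subgroup (FreeGroup A), IsAlgebraicExtension H K → K.FG := by
  obtain ⟨S, rfl, hS⟩ := (Subgroup.fg_iff H).1 hH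
  obtain ⟨P, hP_finite, h1, hSP, hP⟩ := Takahasi.exists_finite_connected_superset hS
  have eq_loopSubgroup (K : Subgroup (FreeGroup A))
      (hK : IsAlgebraicExtension (Subgroup.closure S) K) : Takahasi.loopSubgroup K P = K :=
    Takahasi.eq_loopSubgroup_of_isAlgebraicExtension hP h1 hSP hK
  constructor
  · exact (Takahasi.finite_range_loopSubgroup hP_finite).subset
      fun K hK => ⟨K, eq_loopSubgroup K hK⟩
  · intro K hK
    rw [← eq_loopSubgroup K hK]
    exact Takahasi.fg_loopSubgroup hP_finite
end
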